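/- Let q = p^f be a power of a prime p, let 2m ≥ 4 and suppose GSp_{2m}(q) is not solvable. Let π be a set of primes with 2 ∈ π, 3 ∉ π and p ∉ π, and let H be a solvable Hall π-subgroup of GSp_{2m}(q). Set G = H·Sp_{2m}(q). Then there exist x, y, z ∈ G such that H ∩ H^x ∩ H^y ∩ H^z is contained in the center Z(GSp_{2m}(q)), i.e. consists of scalar matrices. -/

import Mathlib

open Matrix Pointwise

/-- `H^x = x⁻¹ H x`. -/
def conjBy {G : Type*} [Group G] (H : Subgroup G) (x : G) : Subgroup G :=
  Subgroup.map ((MulAut.conj x⁻¹).toMonoidHom) H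

/-- Hall π-subgroup of the whole group. -/
def IsHallSubgroup {G : Type*} [Group G] (π : Set ℕ) (H : Subgroup G) : Prop :=
  (∀ r : ℕ, r.Prime → r ∣ Nat.card H → r ∈ π) ∧ ∀ r ∈ π, ¬ r ∣ H.index

/-- Hall π-subgroup of the subgroup `K`. -/
def IsHallSubgroupIn {G : Type*} [Group G] (π : Set ℕ) (K H : Subgroup G) : Prop :=
  H ≤ K ∧ (∀ r : ℕ, r.Prime → r ∣ Nat.card H → r ∈ π) ∧ ∀ r ∈ π, ¬ r ∣ H.relIndex K

/-- The subgroup `SL_n` of `GL_n`. -/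
def SLsub (n : ℕ) (F : Type*) [Field F] : Subgroup (GL (Fin n) F) where
  carrier := {g | Matrix.det (g : Matrix (Fin n) (Fin n) F) = 1}
  one_mem' := by simp
  mul_mem' := by
    intro a b ha hb
    simp only [Set.mem_setOf_eq, Units.val_mul, Matrix.det_mul] at *
    rw [ha, hb, one_mul]
  inv_mem' := by
    intro g hg
    simp only [Set.mem_setOf_eq] at *
    have h1 : ((g⁻¹ : GL (Fin n) F) : Matrix (Fin n) (Fin n) F) *
        (g : Matrix (Fin n) (Fin n) F) = 1 := g.inv_mul
    have := congrArg Matrix.det h1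
    rw [Matrix.det_mul, Matrix.det_one, hg, mul_one] at this
    exact this

/-- The group of similitudes of the bilinear form `B` (acting on row vectors). -/
def similitudeGroup {n : ℕ} {F : Type*} [Field F]
    (B : (Fin n → F) → (Fin n → F) → F) : Subgroup (GL (Fin n) F) where
  carrier := {g | ∃ c : Fˣ, ∀ u v : Fin n → F,
    B (Matrix.vecMul u (g : Matrix (Fin n) (Fin n) F))
      (Matrix.vecMul v (g : Matrix (Fin n) (Fin n) F)) = (c : F) * B u v}
  one_mem' := ⟨1, by simp⟩
  mul_mem' := by
    rintro a b ⟨c, hc⟩ ⟨d, hd⟩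
    refine ⟨c * d, fun u v => ?_⟩
    simp only [Units.val_mul, ← Matrix.vecMul_vecMul, hd, hc]
    ring
  inv_mem' := by
    rintro g ⟨c, hc⟩
    refine ⟨c⁻¹, fun u v => ?_⟩
    have h1 : ∀ w : Fin n → F, Matrix.vecMul
        (Matrix.vecMul w ((g⁻¹ : GL (Fin n) F) : Matrix (Fin n) (Fin n) F))
        (g : Matrix (Fin n) (Fin n) F) = w := by
      intro w
      rw [Matrix.vecMul_vecMul, g.inv_mul, Matrix.vecMul_one]
    have h2 := hc (Matrix.vecMul u ((g⁻¹ : GL (Fin n) F) : Matrix (Fin n) (Fin n) F))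
      (Matrix.vecMul v ((g⁻¹ : GL (Fin n) F) : Matrix (Fin n) (Fin n) F))
    rw [h1, h1] at h2
    rw [h2, Units.val_inv_eq_inv_val, inv_mul_cancel_left₀ (by exact_mod_cast c.ne_zero)]

/-- The isometry group of the bilinear form `B` (acting on row vectors). -/
def isometryGroup {n : ℕ} {F : Type*} [Field F]
    (B : (Fin n → F) → (Fin n → F) → F) : Subgroup (GL (Fin n) F) where
  carrier := {g | ∀ u v : Fin n → F,
    B (Matrix.vecMul u (g : Matrix (Fin n) (Fin n) F))
      (Matrix.vecMul v (g : Matrix (Fin n) (Fin n) F)) = B u v}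
  one_mem' := by simp
  mul_mem' := by
    intro a b ha hb u v
    simp only [Set.mem_setOf_eq] at ha hb
    simp only [Units.val_mul, ← Matrix.vecMul_vecMul]
    rw [hb, ha]
  inv_mem' := by
    intro g hg u v
    have h1 : ∀ w : Fin n → F, Matrix.vecMul
        (Matrix.vecMul w ((g⁻¹ : GL (Fin n) F) : Matrix (Fin n) (Fin n) F))
        (g : Matrix (Fin n) (Fin n) F) = w := by
      intro w
      rw [Matrix.vecMul_vecMul, g.inv_mul, Matrix.vecMul_one]
    have h2 := hg (Matrix.vecMul u ((g⁻¹ : GL (Fin n) F) : Matrix (Fin n) (Fin n) F))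
      (Matrix.vecMul v ((g⁻¹ : GL (Fin n) F) : Matrix (Fin n) (Fin n) F))
    rw [h1, h1] at h2
    exact h2.symm

/-- The group of similitudes of the quadratic form `Q` (acting on row vectors). -/
def qSimilitudeGroup {n : ℕ} {F : Type*} [Field F]
    (Q : (Fin n → F) → F) : Subgroup (GL (Fin n) F) where
  carrier := {g | ∃ c : Fˣ, ∀ v : Fin n → F,
    Q (Matrix.vecMul v (g : Matrix (Fin n) (Fin n) F)) = (c : F) * Q v}
  one_mem' := ⟨1, by simp⟩
  mul_mem' := by
    rintro a b ⟨c, hc⟩ ⟨d, hd⟩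
    refine ⟨c * d, fun v => ?_⟩
    simp only [Units.val_mul, ← Matrix.vecMul_vecMul, hd, hc]
    ring
  inv_mem' := by
    rintro g ⟨c, hc⟩
    refine ⟨c⁻¹, fun v => ?_⟩
    have h1 : ∀ w : Fin n → F, Matrix.vecMul
        (Matrix.vecMul w ((g⁻¹ : GL (Fin n) F) : Matrix (Fin n) (Fin n) F))
        (g : Matrix (Fin n) (Fin n) F) = w := by
      intro w
      rw [Matrix.vecMul_vecMul, g.inv_mul, Matrix.vecMul_one]
    have h2 := hc (Matrix.vecMul v ((g⁻¹ : GL (Fin n) F) : Matrix (Fin n) (Fin n) F))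
    rw [h1] at h2
    rw [h2, Units.val_inv_eq_inv_val, inv_mul_cancel_left₀ (by exact_mod_cast c.ne_zero)]

/-- The unitary group `GU_n` with respect to the field automorphism `φ`. -/
def GUgrp (n : ℕ) {K : Type*} [Field K] (φ : K →+* K) : Subgroup (GL (Fin n) K) where
  carrier := {g | ((g : Matrix (Fin n) (Fin n) K).map φ)ᵀ * (g : Matrix (Fin n) (Fin n) K) = 1}
  one_mem' := by
    simp [Matrix.map_one φ φ.map_zero φ.map_one]
  mul_mem' := by
    intro a b ha hb
    simp only [Set.mem_setOf_eq, Units.val_mul, Matrix.map_mul, Matrix.transpose_mul] at *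
    calc ((b : Matrix (Fin n) (Fin n) K).map φ)ᵀ * ((a : Matrix (Fin n) (Fin n) K).map φ)ᵀ *
          ((a : Matrix (Fin n) (Fin n) K) * (b : Matrix (Fin n) (Fin n) K))
        = ((b : Matrix (Fin n) (Fin n) K).map φ)ᵀ *
          (((a : Matrix (Fin n) (Fin n) K).map φ)ᵀ * (a : Matrix (Fin n) (Fin n) K)) *
          (b : Matrix (Fin n) (Fin n) K) := by noncomm_ring
      _ = 1 := by rw [ha, mul_one, hb]
  inv_mem' := by
    intro g hg
    simp only [Set.mem_setOf_eq] at *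
    have hcomm : (g : Matrix (Fin n) (Fin n) K) * ((g : Matrix (Fin n) (Fin n) K).map φ)ᵀ = 1 :=
      mul_eq_one_comm.mp hg
    have h1 : ((g : Matrix (Fin n) (Fin n) K) * ((g⁻¹ : GL (Fin n) K) : Matrix (Fin n) (Fin n) K)).map φ = 1 := by
      rw [g.mul_inv]
      exact Matrix.map_one φ φ.map_zero φ.map_one
    rw [Matrix.map_mul] at h1
    have h2 := congrArg Matrix.transpose h1
    rw [Matrix.transpose_mul, Matrix.transpose_one] at h2
    calc (((g⁻¹ : GL (Fin n) K) : Matrix (Fin n) (Fin n) K).map φ)ᵀ *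
          ((g⁻¹ : GL (Fin n) K) : Matrix (Fin n) (Fin n) K)
        = (((g⁻¹ : GL (Fin n) K) : Matrix (Fin n) (Fin n) K).map φ)ᵀ *
          (((g : Matrix (Fin n) (Fin n) K).map φ)ᵀ * (g : Matrix (Fin n) (Fin n) K)) *
          ((g⁻¹ : GL (Fin n) K) : Matrix (Fin n) (Fin n) K) := by rw [hg, mul_one]
      _ = ((((g⁻¹ : GL (Fin n) K) : Matrix (Fin n) (Fin n) K).map φ)ᵀ *
          ((g : Matrix (Fin n) (Fin n) K).map φ)ᵀ) *
          ((g : Matrix (Fin n) (Fin n) K) * ((g⁻¹ : GL (Fin n) K) : Matrix (Fin n) (Fin n) K)) := by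
            noncomm_ring
      _ = 1 := by rw [h2, g.mul_inv, mul_one]


namespace HallSp

variable {F V : Type*} [Field F] [AddCommGroup V] [Module F V]

/-- Isometries of the form. -/
def Iso (B : LinearMap.BilinForm F V) (g : V ≃ₗ[F] V) : Prop := ∀ x y, B (g x) (g y) = B x y

theorem Iso.mul {B : LinearMap.BilinForm F V} {g h : V ≃ₗ[F] V} (hg : Iso B g) (hh : Iso B h) :
    Iso B (g * h) := fun x y => by
  rw [LinearEquiv.mul_apply, LinearEquiv.mul_apply, hg, hh]

theorem app_inv (g : V ≃ₗ[F] V) (x : V) : g (g⁻¹ x) = x := by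
  rw [← LinearEquiv.mul_apply, mul_inv_cancel]; rfl

theorem inv_app (g : V ≃ₗ[F] V) (x : V) : g⁻¹ (g x) = x := by
  rw [← LinearEquiv.mul_apply, inv_mul_cancel]; rfl

theorem Iso.inv {B : LinearMap.BilinForm F V} {g : V ≃ₗ[F] V} (hg : Iso B g) :
    Iso B g⁻¹ := fun x y => by
  rw [← hg, app_inv, app_inv]

theorem Iso.one {B : LinearMap.BilinForm F V} : Iso B (1 : V ≃ₗ[F] V) := fun _ _ => rfl

theorem anti {B : LinearMap.BilinForm F V} (hB : ∀ x, B x x = 0) (x y : V) : B x y = - B y x := by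
  have h := hB (x + y)
  simp only [map_add, LinearMap.add_apply, hB] at h
  linear_combination h

/-- a quaternion pair: two elements of order four acting on the plane spanned by `w`, `v`. -/
structure QP (B : LinearMap.BilinForm F V) (a b : F) (w v : V) (i j : V ≃ₗ[F] V) : Prop where
  ne : B w v ≠ 0
  iw : i w = v
  iv : i v = -w
  ic : ∀ x, B w x = 0 → B v x = 0 → i x = x
  jw : j w = a • w + b • v
  jv : j v = b • w - a • v
  jc : ∀ x, B w x = 0 → B v x = 0 → j x = x
  ii : Iso B i
  ij : Iso B j

theorem decomp {B : LinearMap.BilinForm F V} (hB : ∀ x, B x x = 0) {w v : V} (hne : B w v ≠ 0)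
    (x : V) : ∃ (α β : F) (c : V), x = α • w + β • v + c ∧ B w c = 0 ∧ B v c = 0 := by
  refine ⟨B x v / B w v, B w x / B w v, x - ((B x v / B w v) • w + (B w x / B w v) • v), by abel, ?_, ?_⟩
  · simp only [map_sub, map_add, map_smul, smul_eq_mul, hB]
    field_simp; ring
  · simp only [map_sub, map_add, map_smul, smul_eq_mul, hB]
    rw [anti hB v w, anti hB v x]
    field_simp; ring

theorem quad_plane {B : LinearMap.BilinForm F V} (hB : ∀ x, B x x = 0) {w v : V} (hne : B w v ≠ 0)
    {g : V ≃ₗ[F] V} (hg : Iso B g) {α β γ δ : F} (h1 : g w = α • w + β • v)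
    (h2 : g v = γ • w + δ • v) :
    ∃ τ : F, ∀ p q : F, g (g (p • w + q • v)) = τ • g (p • w + q • v) - (p • w + q • v) := by
  have hd : α * δ - β * γ = 1 := by
    have h := hg w v
    rw [h1, h2] at h
    simp only [map_add, map_smul, LinearMap.add_apply, LinearMap.smul_apply, smul_eq_mul, hB] at h
    rw [anti hB v w] at h
    apply mul_right_cancel₀ hne
    linear_combination h
  refine ⟨α + δ, fun p q => ?_⟩
  simp only [map_add, map_smul, h1, h2]
  have h3 : β * γ = α * δ - 1 := by linear_combination -hd
  match_scalars
  · linear_combination p * h3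
  · linear_combination q * h3

namespace QP

variable {B : LinearMap.BilinForm F V} {a b : F} {w v : V} {i j : V ≃ₗ[F] V}

theorem tU (h : QP B a b w v i j) (α β : F) : (i * i) (α • w + β • v) = -(α • w + β • v) := by
  simp only [LinearEquiv.mul_apply, map_add, map_smul, h.iw, h.iv, map_neg]
  module

theorem tC (h : QP B a b w v i j) {x : V} (h1 : B w x = 0) (h2 : B v x = 0) : (i * i) x = x := by
  simp only [LinearEquiv.mul_apply, h.ic x h1 h2]

theorem memU (hB : ∀ x, B x x = 0) (h2 : (2 : F) ≠ 0) (h : QP B a b w v i j) {x : V} :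
    (i * i) x = -x ↔ ∃ α β : F, x = α • w + β • v := by
  constructor
  · intro hx
    obtain ⟨α, β, c, rfl, hc1, hc2⟩ := decomp hB h.ne x
    rw [map_add, h.tU, h.tC hc1 hc2] at hx
    have : (2 : F) • c = 0 := by
      linear_combination (norm := module) hx
    have hc : c = 0 := (smul_eq_zero.mp this).resolve_left h2
    exact ⟨α, β, by rw [hc, add_zero]⟩
  · rintro ⟨α, β, rfl⟩
    exact h.tU α β

theorem memC (hB : ∀ x, B x x = 0) (h2 : (2 : F) ≠ 0) (h : QP B a b w v i j) {x : V} :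
    (i * i) x = x ↔ B w x = 0 ∧ B v x = 0 := by
  constructor
  · intro hx
    obtain ⟨α, β, c, rfl, hc1, hc2⟩ := decomp hB h.ne x
    rw [map_add, h.tU, h.tC hc1 hc2] at hx
    have : (2 : F) • (α • w + β • v) = 0 := by
      linear_combination (norm := module) -hx
    have hc := (smul_eq_zero.mp this).resolve_left h2
    rw [hc, zero_add]
    exact ⟨hc1, hc2⟩
  · rintro ⟨h3, h4⟩
    exact h.tC h3 h4

theorem split (hB : ∀ x, B x x = 0) (h : QP B a b w v i j) (x : V) :
    ∃ y c, x = y + c ∧ (i * i) y = -y ∧ (i * i) c = c := by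
  obtain ⟨α, β, c, rfl, hc1, hc2⟩ := decomp hB h.ne x
  exact ⟨_, c, rfl, h.tU α β, h.tC hc1 hc2⟩

theorem tt (hB : ∀ x, B x x = 0) (h : QP B a b w v i j) : (i * i) * (i * i) = 1 := by
  ext x
  obtain ⟨y, c, rfl, hy, hc⟩ := h.split hB x
  rw [LinearEquiv.mul_apply, map_add, hy, hc, map_add, map_neg, hy, hc]
  simp

theorem jj (hB : ∀ x, B x x = 0) (hab : a ^ 2 + b ^ 2 = -1) (h : QP B a b w v i j) :
    j * j = i * i := by
  ext x
  obtain ⟨α, β, c, rfl, hc1, hc2⟩ := decomp hB h.ne x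
  rw [map_add (j * j), map_add (i * i) _ c, h.tU, h.tC hc1 hc2]
  simp only [LinearEquiv.mul_apply, map_add, map_smul, h.jw, h.jv, h.jc c hc1 hc2, map_sub]
  congr 1
  match_scalars
  · linear_combination α * hab
  · linear_combination β * hab

theorem anticomm (hB : ∀ x, B x x = 0) (h : QP B a b w v i j) :
    i * j = (i * i) * (j * i) := by
  ext x
  obtain ⟨α, β, c, rfl, hc1, hc2⟩ := decomp hB h.ne x
  simp only [LinearEquiv.mul_apply, map_add, map_smul, h.jw, h.jv, h.jc c hc1 hc2, map_sub,
    h.ic c hc1 hc2, h.iw, h.iv, map_neg]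
  module

theorem uC (hB : ∀ x, B x x = 0) (h2 : (2 : F) ≠ 0) (h : QP B a b w v i j) {x : V}
    (hx : (i * i) x = x) : i x = x ∧ j x = x := by
  rw [h.memC hB h2] at hx
  exact ⟨h.ic x hx.1 hx.2, h.jc x hx.1 hx.2⟩

theorem orth (h2 : (2 : F) ≠ 0) (h : QP B a b w v i j) {x y : V}
    (hx : (i * i) x = -x) (hy : (i * i) y = y) : B x y = 0 := by
  have := (h.ii.mul h.ii) x y
  rw [hx, hy] at this
  simp only [map_neg, LinearMap.neg_apply] at this
  have h3 : (2 : F) * B x y = 0 := by linear_combination -this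
  exact (mul_eq_zero.mp h3).resolve_left h2

/-- an isometry which preserves the plane commutes with the involution. -/
theorem comm_of_U (hB : ∀ x, B x x = 0) (h2 : (2 : F) ≠ 0) (h : QP B a b w v i j)
    {g : V ≃ₗ[F] V} (hg : Iso B g) (hU : ∀ x, (i * i) x = -x → (i * i) (g x) = -g x) :
    Commute g (i * i) := by
  have hgw : (i * i) (g w) = - g w := hU w (by simpa using h.tU 1 0)
  have hgv : (i * i) (g v) = - g v := hU v (by simpa using h.tU 0 1)
  have hgne : B (g w) (g v) ≠ 0 := by rw [hg]; exact h.ne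
  ext x
  obtain ⟨y, c, rfl, hy, hc⟩ := h.split hB x
  have hgc : (i * i) (g c) = g c := by
    rw [h.memC hB h2] at hc
    obtain ⟨α, β, d, e, hd1, hd2⟩ := decomp hB hgne (g c)
    have e1 : B (g w) (g c) = 0 := by rw [hg]; exact hc.1
    have e2 : B (g v) (g c) = 0 := by rw [hg]; exact hc.2
    -- components of g c along the plane vanish
    obtain ⟨p, q, d', e', hd1', hd2'⟩ := decomp hB h.ne (g c)
    obtain ⟨y', c', ec, hy', hc'⟩ := h.split hB (g c)
    have hy0 : y' = 0 := by
      obtain ⟨α₂, β₂, d₂, e₂, hd₁, hd₂⟩ := decomp hB hgne y'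
      have hort : ∀ z, (i * i) z = -z → B z y' = B z (g c) := by
        intro z hz
        rw [ec, map_add, h.orth h2 hz hc', add_zero]
      have k1 : B (g w) y' = 0 := by rw [hort _ hgw, e1]
      have k2 : B (g v) y' = 0 := by rw [hort _ hgv, e2]
      obtain ⟨r1, r2, hr⟩ := (h.memU hB h2).mp hy'
      obtain ⟨s1, s2, hs⟩ := (h.memU hB h2).mp hgw
      obtain ⟨u1, u2, hu⟩ := (h.memU hB h2).mp hgv
      have hdet : (s1 * u2 - s2 * u1) * B w v ≠ 0 := by
        rw [hs, hu] at hgne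
        simp only [map_add, map_smul, LinearMap.add_apply, LinearMap.smul_apply, smul_eq_mul, hB,
          anti hB v w] at hgne
        convert hgne using 1; ring
      rw [hs, hr] at k1
      rw [hu, hr] at k2
      simp only [map_add, map_smul, LinearMap.add_apply, LinearMap.smul_apply, smul_eq_mul, hB,
          anti hB v w] at k1 k2
      have z1 : r1 = 0 := by
        apply (mul_eq_zero.mp (_ : ((s1 * u2 - s2 * u1) * B w v) * r1 = 0)).resolve_left hdet
        linear_combination u1 * k1 - s1 * k2
      have z2 : r2 = 0 := by
        apply (mul_eq_zero.mp (_ : ((s1 * u2 - s2 * u1) * B w v) * r2 = 0)).resolve_left hdet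
        linear_combination u2 * k1 - s2 * k2
      rw [hr, z1, z2]; simp
    rw [ec, hy0, zero_add, hc']
  rw [LinearEquiv.mul_apply g, LinearEquiv.mul_apply (i * i) g, map_add (i * i), hy, hc,
    map_add, map_add, map_add, hU y hy, hgc, map_neg]

theorem U_of_comm {t g : V ≃ₗ[F] V} (hc : Commute g t) {x : V} (hx : t x = -x) :
    t (g x) = -g x := by
  rw [← LinearEquiv.mul_apply, ← hc.eq, LinearEquiv.mul_apply, hx, map_neg]

theorem C_of_comm {t g : V ≃ₗ[F] V} (hc : Commute g t) {x : V} (hx : t x = x) :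
    t (g x) = g x := by
  rw [← LinearEquiv.mul_apply, ← hc.eq, LinearEquiv.mul_apply, hx]

theorem quad (hB : ∀ x, B x x = 0) (h2 : (2 : F) ≠ 0) (h : QP B a b w v i j)
    {g : V ≃ₗ[F] V} (hg : Iso B g) (hU : ∀ x, (i * i) x = -x → (i * i) (g x) = -g x) :
    ∃ τ : F, ∀ x, (i * i) x = -x → g (g x) = τ • g x - x := by
  obtain ⟨s1, s2, hs⟩ := (h.memU hB h2).mp (hU w (by simpa using h.tU 1 0))
  obtain ⟨u1, u2, hu⟩ := (h.memU hB h2).mp (hU v (by simpa using h.tU 0 1))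
  obtain ⟨τ, hτ⟩ := quad_plane hB h.ne hg hs hu
  refine ⟨τ, fun x hx => ?_⟩
  obtain ⟨α, β, rfl⟩ := (h.memU hB h2).mp hx
  exact hτ α β

theorem sign_of_quad {B : LinearMap.BilinForm F V} {S : V → Prop} {g : V ≃ₗ[F] V} (hg : Iso B g)
    (h2 : (2 : F) ≠ 0) {w v : V} (hw : S w) (hv : S v) (hne : B w v ≠ 0)
    (hsq : ∀ x, S x → g (g x) = x) {τ : F} (hq : ∀ x, S x → g (g x) = τ • g x - x) :
    (∀ x, S x → g x = x) ∨ (∀ x, S x → g x = -x) := by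
  have key : ∀ x, S x → τ • g x = (2 : F) • x := fun x hx => by
    have := hq x hx
    rw [hsq x hx] at this
    linear_combination (norm := module) -this
  have hw0 : w ≠ 0 := by rintro rfl; simp at hne
  have hτ : τ ≠ 0 := by
    rintro rfl
    have := key w hw
    rw [zero_smul] at this
    rcases smul_eq_zero.mp this.symm with h | h
    · exact h2 h
    · exact hw0 h
  have key2 : ∀ x, S x → g x = (2 / τ) • x := fun x hx => by
    rw [div_eq_inv_mul, mul_smul, ← key x hx, smul_smul, inv_mul_cancel₀ hτ, one_smul]
  have hc : (2 / τ) * (2 / τ) = 1 := by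
    have := hg w v
    rw [key2 w hw, key2 v hv] at this
    simp only [map_smul, LinearMap.smul_apply, smul_eq_mul] at this
    apply mul_right_cancel₀ hne
    linear_combination this
  rcases mul_self_eq_one_iff.mp hc with h | h
  · left; intro x hx; rw [key2 x hx, h, one_smul]
  · right; intro x hx; rw [key2 x hx, h, neg_one_smul]

theorem sign (hB : ∀ x, B x x = 0) (h2 : (2 : F) ≠ 0) (h : QP B a b w v i j)
    {g : V ≃ₗ[F] V} (hg : Iso B g) (hU : ∀ x, (i * i) x = -x → (i * i) (g x) = -g x)
    (hsq : ∀ x, (i * i) x = -x → g (g x) = x) :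
    (∀ x, (i * i) x = -x → g x = x) ∨ (∀ x, (i * i) x = -x → g x = -x) := by
  obtain ⟨τ, hτ⟩ := h.quad hB h2 hg hU
  exact sign_of_quad hg h2 (by simpa using h.tU 1 0) (by simpa using h.tU 0 1) h.ne hsq hτ

theorem scal (hB : ∀ x, B x x = 0) (h2 : (2 : F) ≠ 0) (hab : a ^ 2 + b ^ 2 = -1)
    (h : QP B a b w v i j)
    {g : V ≃ₗ[F] V} (hg : Iso B g) (hU : ∀ x, (i * i) x = -x → (i * i) (g x) = -g x)
    (hi : ∀ x, (i * i) x = -x → g (i x) = i (g x)) (hj : ∀ x, (i * i) x = -x → g (j x) = j (g x)) :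
    (∀ x, (i * i) x = -x → g x = x) ∨ (∀ x, (i * i) x = -x → g x = -x) := by
  have hw : (i * i) w = -w := by simpa using h.tU 1 0
  have hv : (i * i) v = -v := by simpa using h.tU 0 1
  obtain ⟨p, q, hs⟩ := (h.memU hB h2).mp (hU w hw)
  have hgv : g v = p • v - q • w := by
    have := hi w hw
    rw [h.iw, hs, map_add, map_smul, map_smul, h.iw, h.iv] at this
    rw [this]; module
  have hjj := hj w hw
  rw [h.jw, map_add, map_smul, map_smul, hs, hgv, map_add, map_smul, map_smul, h.jw, h.jv] at hjj
  have e1 := congrArg (fun y => B y v) hjj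
  have e2 := congrArg (fun y => B w y) hjj
  simp only [map_add, map_sub, map_smul, LinearMap.add_apply, LinearMap.sub_apply,
    LinearMap.smul_apply, smul_eq_mul, hB] at e1 e2
  have k1 : q * b = 0 := by
    have : (2 * B w v) * (q * b) = 0 := by linear_combination -e1
    exact (mul_eq_zero.mp this).resolve_left (mul_ne_zero h2 h.ne)
  have k2 : q * a = 0 := by
    have : (2 * B w v) * (q * a) = 0 := by linear_combination e2
    exact (mul_eq_zero.mp this).resolve_left (mul_ne_zero h2 h.ne)
  have hq : q = 0 := by linear_combination q * hab - a * k2 - b * k1 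
  rw [hq, zero_smul, add_zero] at hs
  rw [hq, zero_smul, sub_zero] at hgv
  have hp : p * p = 1 := by
    have := hg w v
    rw [hs, hgv] at this
    simp only [map_smul, LinearMap.smul_apply, smul_eq_mul] at this
    apply mul_right_cancel₀ h.ne
    linear_combination this
  have key : ∀ x, (i * i) x = -x → g x = p • x := by
    intro x hx
    obtain ⟨α, β, rfl⟩ := (h.memU hB h2).mp hx
    rw [map_add, map_smul, map_smul, hs, hgv]; module
  rcases mul_self_eq_one_iff.mp hp with e | e
  · left; intro x hx; rw [key x hx, e, one_smul]
  · right; intro x hx; rw [key x hx, e, neg_one_smul]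

end QP

end HallSp
namespace HallSp

variable {F V : Type*} [Field F] [AddCommGroup V] [Module F V]

/-- elements of order prime to the characteristic and to three. -/
def Good (g : V ≃ₗ[F] V) : Prop := ∃ k : ℕ, (k : F) ≠ 0 ∧ ¬ 3 ∣ k ∧ g ^ k = 1

theorem pp {r : V ≃ₗ[F] V} (hr : Good r) {x : V} (hx : r (r x) = (2 : F) • r x - x) : r x = x := by
  obtain ⟨k, hk, -, h1⟩ := hr
  have key : ∀ n : ℕ, (r ^ n) x = x + (n : F) • (r x - x) := by
    intro n
    induction n with
    | zero => simp
    | succ n ih =>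
      rw [pow_succ', LinearEquiv.mul_apply, ih, map_add, map_smul, map_sub, hx]
      push_cast
      module
  have := key k
  rw [h1] at this
  have h3 : (k : F) • (r x - x) = 0 := by
    have h4 : (1 : V ≃ₗ[F] V) x = x := rfl
    rw [h4] at this
    linear_combination (norm := module) -this
  exact sub_eq_zero.mp ((smul_eq_zero.mp h3).resolve_left hk)

theorem Good.pow {r : V ≃ₗ[F] V} (hr : Good r) (n : ℕ) : Good (r ^ n) := by
  obtain ⟨k, hk, h3, h1⟩ := hr
  exact ⟨k, hk, h3, by rw [← pow_mul, mul_comm, pow_mul, h1, one_pow]⟩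

/-- square roots of the involution. -/
structure QE (t u : V ≃ₗ[F] V) : Prop where
  sq : u * u = t
  fx : ∀ x, t x = x → u x = x

namespace QE
variable {t u : V ≃ₗ[F] V}

theorem comm (h : QE t u) : Commute u t := by
  rw [← h.sq]; exact (Commute.refl u).mul_right (Commute.refl u)

theorem fxi (h : QE t u) {x : V} (hx : t x = x) : u⁻¹ x = x := by
  have := h.fx x hx
  nth_rewrite 1 [← this]; rw [inv_app]

theorem invU (h : QE t u) {x : V} (hx : t x = -x) : u⁻¹ x = -u x := by
  have : x = u (- u x) := by
    rw [map_neg, ← LinearEquiv.mul_apply, h.sq, hx, neg_neg]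
  nth_rewrite 1 [this]
  rw [inv_app]

theorem U (h : QE t u) {x : V} (hx : t x = -x) : t (u x) = - u x := QP.U_of_comm h.comm hx

end QE

namespace QP

variable {B : LinearMap.BilinForm F V} {a b : F} {w v : V} {i j : V ≃ₗ[F] V}

theorem qei (hB : ∀ x, B x x = 0) (h2 : (2 : F) ≠ 0) (h : QP B a b w v i j) : QE (i * i) i :=
  ⟨rfl, fun _ hx => (h.uC hB h2 hx).1⟩

theorem qej (hB : ∀ x, B x x = 0) (h2 : (2 : F) ≠ 0) (hab : a ^ 2 + b ^ 2 = -1)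
    (h : QP B a b w v i j) : QE (i * i) j :=
  ⟨h.jj hB hab, fun _ hx => (h.uC hB h2 hx).2⟩

theorem qeij (hB : ∀ x, B x x = 0) (h2 : (2 : F) ≠ 0) (hab : a ^ 2 + b ^ 2 = -1)
    (h : QP B a b w v i j) : QE (i * i) (i * j) := by
  refine ⟨?_, fun x hx => ?_⟩
  · nth_rewrite 2 [h.anticomm hB]
    have h1 := (h.qej hB h2 hab).comm.eq
    have h3 := h.jj hB hab
    have h4 := h.tt hB
    calc i * j * (i * i * (j * i)) = i * (j * (i * i)) * (j * i) := by group
      _ = i * (i * i) * (j * j) * i := by rw [h1]; group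
      _ = ((i * i) * (i * i)) * (i * i) := by rw [h3]; group
      _ = i * i := by rw [h4, one_mul]
  · rw [LinearEquiv.mul_apply, (h.uC hB h2 hx).2, (h.uC hB h2 hx).1]

theorem w_ne (h : QP B a b w v i j) : w ≠ 0 := by
  intro h0
  apply h.ne
  rw [h0]; simp

theorem Uw (h : QP B a b w v i j) : (i * i) w = -w := by simpa using h.tU 1 0
theorem Uv (h : QP B a b w v i j) : (i * i) v = -v := by simpa using h.tU 0 1

end QP

theorem two_cancel (h2 : (2 : F) ≠ 0) {x : V} (h : x = -x) : x = 0 := by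
  have : (2 : F) • x = 0 := by linear_combination (norm := module) h
  exact (smul_eq_zero.mp this).resolve_left h2

section C1
variable {B : LinearMap.BilinForm F V} {a b : F} {w v : V} {i j : V ≃ₗ[F] V}

theorem c1_key {t s u : V ≃ₗ[F] V} (hu : QE t u) (htt : t * t = 1) (hs : t * s * t = s⁻¹)
    (hc : Commute s (u * s * u⁻¹)) {x : V} (hx : t x = -x) :
    u (s (s x) - (2 : F) • x + s⁻¹ (s⁻¹ x)) =
      s (s (u⁻¹ x)) - (2 : F) • (u⁻¹ x) + s⁻¹ (s⁻¹ (u⁻¹ x)) := by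
  have ts : ∀ y, t (s y) = s⁻¹ (t y) := fun y => by
    rw [← hs, LinearEquiv.mul_apply, LinearEquiv.mul_apply, ← LinearEquiv.mul_apply t t y, htt]; rfl
  have ts' : ∀ y, t (s⁻¹ y) = s (t y) := fun y => by
    have : t * s⁻¹ = s * t := by
      rw [← hs, ← mul_assoc, ← mul_assoc, htt, one_mul]
    rw [← LinearEquiv.mul_apply, this]; rfl
  have hXC : ∀ y, t y = -y → t (s y - s⁻¹ y) = s y - s⁻¹ y := fun y hy => by
    rw [map_sub, ts, ts', hy, map_neg, map_neg]; abel
  have c1 := hc.eq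
  have c2 := hc.inv_left.eq
  have c3 := hc.inv_right.eq
  have c4 := hc.inv_inv.eq
  have hinv : (u * s * u⁻¹)⁻¹ = u * s⁻¹ * u⁻¹ := by group
  rw [hinv] at c3 c4
  have e1 := congrArg (fun g => g x) c1
  have e2 := congrArg (fun g => g x) c2
  have e3 := congrArg (fun g => g x) c3
  have e4 := congrArg (fun g => g x) c4
  simp only [LinearEquiv.mul_apply] at e1 e2 e3 e4
  have hx' : t (u⁻¹ x) = - u⁻¹ x := QP.U_of_comm hu.comm.inv_left hx
  have f1 : u (s (u⁻¹ x) - s⁻¹ (u⁻¹ x)) = s (u⁻¹ x) - s⁻¹ (u⁻¹ x) := hu.fx _ (hXC _ hx')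
  have f2 : u⁻¹ (s x - s⁻¹ x) = s x - s⁻¹ x := hu.fxi (hXC _ hx)
  have g1 : s (u (s (u⁻¹ x) - s⁻¹ (u⁻¹ x))) - s⁻¹ (u (s (u⁻¹ x) - s⁻¹ (u⁻¹ x))) =
      u (s (u⁻¹ (s x - s⁻¹ x))) - u (s⁻¹ (u⁻¹ (s x - s⁻¹ x))) := by
    simp only [map_sub]
    rw [e1, e2, e3, e4]; abel
  rw [f1, f2] at g1
  simp only [map_sub, app_inv, inv_app, map_add, map_smul] at g1 ⊢
  linear_combination (norm := module) -g1

theorem c1 (hB : ∀ x, B x x = 0) (h2 : (2 : F) ≠ 0) (hab : a ^ 2 + b ^ 2 = -1)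
    (h : QP B a b w v i j) (N : Subgroup (V ≃ₗ[F] V)) (hN : ∀ x ∈ N, ∀ y ∈ N, x * y = y * x)
    (hiso : ∀ x ∈ N, Iso B x) (hgood : ∀ x ∈ N, Good x)
    (hi : ∀ x ∈ N, i * x * i⁻¹ ∈ N) (hj : ∀ x ∈ N, j * x * j⁻¹ ∈ N) {n : V ≃ₗ[F] V}
    (hn : n ∈ N) : Commute n (i * i) := by
  obtain ⟨t, ht⟩ : ∃ t, t = i * i := ⟨_, rfl⟩
  have htt : t * t = 1 := by rw [ht]; exact h.tt hB
  have hti : t⁻¹ = t := inv_eq_of_mul_eq_one_left htt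
  have qi : QE t i := ht ▸ h.qei hB h2
  have qj : QE t j := ht ▸ h.qej hB h2 hab
  have qij : QE t (i * j) := ht ▸ h.qeij hB h2 hab
  have hij : ∀ x ∈ N, (i * j) * x * (i * j)⁻¹ ∈ N := fun x hx => by
    have := hi _ (hj x hx)
    convert this using 1; group
  have htN : ∀ x ∈ N, t * x * t ∈ N := fun x hx => by
    have := hi _ (hi x hx)
    have e : t * x * t = i * (i * x * i⁻¹) * i⁻¹ := by
      nth_rewrite 2 [← hti]
      rw [ht]; group
    rw [e]; exact this
  obtain ⟨s, hs⟩ : ∃ s, s = n * (t * n⁻¹ * t) := ⟨_, rfl⟩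
  have hsN : s ∈ N := by rw [hs]; exact N.mul_mem hn (htN _ (N.inv_mem hn))
  have hst : t * s * t = s⁻¹ := by
    have h1 : t * n⁻¹ * t * n = n * (t * n⁻¹ * t) := hN _ (htN _ (N.inv_mem hn)) _ hn
    have h3 : s = t * n⁻¹ * t * n := by rw [hs, h1]
    have h4 : s⁻¹ = t * n * t * n⁻¹ := by rw [hs]; rw [_root_.mul_inv_rev, _root_.mul_inv_rev, _root_.mul_inv_rev, hti, inv_inv]; group
    have h5 : n⁻¹ * (t * n * t) = t * n * t * n⁻¹ := (hN _ (N.inv_mem hn) _ (htN _ hn))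
    rw [h4, h3, ← h5]
    calc t * (t * n⁻¹ * t * n) * t = (t * t) * (n⁻¹ * (t * n * t)) := by group
      _ = _ := by rw [htt, one_mul]
  have htw : t w = -w := by rw [ht]; exact h.Uw
  -- R vanishes on U
  have hR : ∀ x, t x = -x → s (s x) - (2 : F) • x + s⁻¹ (s⁻¹ x) = 0 := by
    have K : ∀ u, QE t u → (∀ x ∈ N, u * x * u⁻¹ ∈ N) → ∀ x, t x = -x →
        u (s (s x) - (2 : F) • x + s⁻¹ (s⁻¹ x)) =
        -(s (s (u x)) - (2 : F) • (u x) + s⁻¹ (s⁻¹ (u x))) := by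
      intro u hu huN x hx
      rw [c1_key hu htt hst (hN _ hsN _ (huN _ hsN)) hx, hu.invU hx]
      simp only [map_neg]; module
    intro x hx
    have k1 := K i qi hi (j x) (qj.U hx)
    have k2 := K j qj hj x hx
    have k3 := K _ qij hij x hx
    simp only [LinearEquiv.mul_apply i j] at k3
    rw [k2, map_neg, k1, neg_neg] at k3
    have k4 := two_cancel h2 k3
    rw [k4, neg_zero, LinearEquiv.map_eq_zero_iff] at k1
    rw [k1, neg_zero, LinearEquiv.map_eq_zero_iff] at k2
    exact k2
  have hs2 : ∀ x, t x = -x → s (s x) = x := by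
    intro x hx
    have := congrArg (fun y => s (s y)) (hR x hx)
    simp only [map_add, map_sub, map_smul, app_inv, map_zero] at this
    have h3 := pp ((hgood s hsN).pow 2) (x := x) (by
      simp only [pow_two, LinearEquiv.mul_apply]
      linear_combination (norm := module) this)
    simpa [pow_two, LinearEquiv.mul_apply] using h3
  have hsU : ∀ x, t x = -x → t (s x) = - s x := by
    intro x hx
    have e1 : t * s = s⁻¹ * t := by rw [← hst, mul_assoc (t * s), htt, mul_one]
    rw [← LinearEquiv.mul_apply, e1, LinearEquiv.mul_apply, hx, map_neg]
    congr 1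
    nth_rewrite 1 [← hs2 x hx]
    rw [inv_app]
  have hcs : Commute s t := by
    rw [ht] at hsU ⊢
    exact h.comm_of_U hB h2 (hiso s hsN) hsU
  have hst1 : s * t = n * t * n⁻¹ := by
    rw [hs]
    calc n * (t * n⁻¹ * t) * t = n * t * n⁻¹ * (t * t) := by group
      _ = _ := by rw [htt, mul_one]
  have hniso := hiso n hn
  have htiso : Iso B t := by rw [ht]; exact h.ii.mul h.ii
  have hsg := h.sign hB h2 (g := n * t * n⁻¹) ((hniso.mul htiso).mul hniso.inv)
    (by
      intro x hx
      rw [← ht] at hx ⊢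
      rw [← hst1]
      exact QP.U_of_comm (hcs.mul_left (Commute.refl t)) hx)
    (by
      intro x hx
      rw [← LinearEquiv.mul_apply]
      have : n * t * n⁻¹ * (n * t * n⁻¹) = 1 := by
        calc n * t * n⁻¹ * (n * t * n⁻¹) = n * (t * t) * n⁻¹ := by group
          _ = 1 := by rw [htt]; group
      rw [this]; rfl)
  rw [← ht] at hsg
  rw [← ht]
  rcases hsg with hp | hm
  · exfalso
    have hnC : ∀ x, t x = -x → t (n⁻¹ x) = n⁻¹ x := by
      intro x hx
      have := hp x hx
      simp only [LinearEquiv.mul_apply] at this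
      apply n.injective
      rw [this, app_inv]
    have hd : ∀ u, QE t u → ∀ x, t x = -x → (u * n * u⁻¹ * n⁻¹) x = u x := by
      intro u hu x hx
      simp only [LinearEquiv.mul_apply]
      rw [hu.fxi (hnC x hx), app_inv]
    have hcom := hN _ (N.mul_mem (hi n hn) (N.inv_mem hn)) _ (N.mul_mem (hj n hn) (N.inv_mem hn))
    have e := LinearEquiv.congr_fun hcom w
    rw [LinearEquiv.mul_apply (i * n * i⁻¹ * n⁻¹), LinearEquiv.mul_apply (j * n * j⁻¹ * n⁻¹),
      hd i qi w htw, hd j qj w htw,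
      hd i qi _ (qj.U htw), hd j qj _ (qi.U htw)] at e
    have e2 := LinearEquiv.congr_fun (h.anticomm hB) w
    rw [← ht] at e2
    rw [LinearEquiv.mul_apply, LinearEquiv.mul_apply t, LinearEquiv.mul_apply j, e,
      qj.U (qi.U htw)] at e2
    have := two_cancel h2 e2
    simp only [LinearEquiv.map_eq_zero_iff] at this
    exact h.w_ne this
  · have : Commute n⁻¹ t := by
      rw [ht] at hm ⊢
      apply h.comm_of_U hB h2 hniso.inv
      intro x hx
      have := hm x hx
      rw [LinearEquiv.mul_apply, LinearEquiv.mul_apply] at this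
      apply n.injective
      rw [this, map_neg, app_inv]
    simpa using this.inv_left

end C1

end HallSp
namespace HallSp

variable {F V : Type*} [Field F] [AddCommGroup V] [Module F V]

/-- the setting: two quaternion pairs whose involutions do not commute. -/
structure Ctx (B : LinearMap.BilinForm F V) (a b : F) (w v : V) (i j : V ≃ₗ[F] V)
    (w' v' : V) (i' j' : V ≃ₗ[F] V) : Prop where
  hB : ∀ x, B x x = 0
  h2 : (2 : F) ≠ 0
  hab : a ^ 2 + b ^ 2 = -1
  h : QP B a b w v i j
  h' : QP B a b w' v' i' j'
  nc : ¬ Commute (i * i) (i' * i')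

variable {B : LinearMap.BilinForm F V} {a b : F} {w v : V} {i j : V ≃ₗ[F] V}
  {w' v' : V} {i' j' : V ≃ₗ[F] V}

namespace Ctx

theorem symm (c : Ctx B a b w v i j w' v' i' j') : Ctx B a b w' v' i' j' w v i j :=
  ⟨c.hB, c.h2, c.hab, c.h', c.h, fun k => c.nc k.symm⟩

/-- The group generated by the two quaternion pairs. -/
def Y (i j i' j' : V ≃ₗ[F] V) : Subgroup (V ≃ₗ[F] V) := Subgroup.closure {i, j, i', j'}

theorem Y_symm : Y i' j' i j = Y i j i' j' := by
  unfold Y; congr 1; ext x; simp only [Set.mem_insert_iff, Set.mem_singleton_iff]; tauto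

theorem mi : i ∈ Y i j i' j' := Subgroup.subset_closure (by simp)
theorem mj : j ∈ Y i j i' j' := Subgroup.subset_closure (by simp)
theorem mi' : i' ∈ Y i j i' j' := Subgroup.subset_closure (by simp)
theorem mj' : j' ∈ Y i j i' j' := Subgroup.subset_closure (by simp)

theorem isoY (c : Ctx B a b w v i j w' v' i' j') {y : V ≃ₗ[F] V} (hy : y ∈ Y i j i' j') :
    Iso B y := by
  induction hy using Subgroup.closure_induction with
  | mem x hx =>
    simp only [Set.mem_insert_iff, Set.mem_singleton_iff] at hx
    rcases hx with rfl | rfl | rfl | rfl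
    · exact c.h.ii
    · exact c.h.ij
    · exact c.h'.ii
    · exact c.h'.ij
  | one => exact Iso.one
  | mul x y _ _ hx hy => exact hx.mul hy
  | inv x _ hx => exact hx.inv

theorem fixY (c : Ctx B a b w v i j w' v' i' j') {y : V ≃ₗ[F] V} (hy : y ∈ Y i j i' j')
    {x : V} (h1 : (i * i) x = x) (h2 : (i' * i') x = x) : y x = x := by
  induction hy using Subgroup.closure_induction with
  | mem g hx =>
    simp only [Set.mem_insert_iff, Set.mem_singleton_iff] at hx
    rcases hx with rfl | rfl | rfl | rfl
    · exact (c.h.uC c.hB c.h2 h1).1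
    · exact (c.h.uC c.hB c.h2 h1).2
    · exact (c.h'.uC c.hB c.h2 h2).1
    · exact (c.h'.uC c.hB c.h2 h2).2
  | one => rfl
  | mul g y _ _ hx hy => rw [LinearEquiv.mul_apply, hy, hx]
  | inv g _ hx => nth_rewrite 1 [← hx]; rw [inv_app]

theorem c2_one (c : Ctx B a b w v i j w' v' i' j')
    {d : V ≃ₗ[F] V} (hiso : Iso B d) (hgood : Good d) (hd : Commute d (i * i))
    (hd' : Commute d (i' * i')) (hC : ∀ x, (i * i) x = x → d x = x) : d = 1 := by
  obtain ⟨τ, hτ⟩ := c.h.quad c.hB c.h2 hiso (fun x hx => QP.U_of_comm hd hx)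
  by_cases h0 : τ = 2
  · subst h0
    ext x
    obtain ⟨y, e, rfl, hy, he⟩ := c.h.split c.hB x
    rw [map_add, hC e he, pp hgood (hτ y hy)]; rfl
  · exfalso
    apply c.nc
    apply Commute.symm
    apply c.h.comm_of_U c.hB c.h2 (c.h'.ii.mul c.h'.ii)
    intro x hx
    obtain ⟨y, rfl⟩ : ∃ y, x = d y := ⟨d⁻¹ x, by rw [app_inv]⟩
    have hy : (i * i) y = -y := by
      have := QP.U_of_comm hd.inv_left hx
      simpa [inv_app] using this
    have h3 : τ - 2 ≠ 0 := sub_ne_zero.mpr h0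
    obtain ⟨z, hz⟩ : ∃ z, z = (τ - 2)⁻¹ • (d y - y) := ⟨_, rfl⟩
    have e1 : d z - z = d y := by
      rw [hz, map_smul, map_sub, hτ y hy, ← smul_sub, inv_smul_eq_iff₀ h3]
      module
    have e2 : (i' * i') (d y) = d ((i' * i') z) - (i' * i') z := by
      rw [← e1, map_sub, ← LinearEquiv.mul_apply (i' * i') d, ← hd'.eq]; rfl
    rw [e2]
    obtain ⟨y1, c1, e, hy1, hc1⟩ := c.h.split c.hB ((i' * i') z)
    rw [e, map_add, hC c1 hc1]
    have : d y1 + c1 - (y1 + c1) = d y1 - y1 := by abel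
    rw [this, map_sub, QP.U_of_comm hd hy1, hy1]; abel

theorem c2' (c : Ctx B a b w v i j w' v' i' j')
    (N : Subgroup (V ≃ₗ[F] V)) (hN : ∀ x ∈ N, ∀ y ∈ N, x * y = y * x)
    (hiso : ∀ x ∈ N, Iso B x) (hgood : ∀ x ∈ N, Good x)
    (hn : ∀ y ∈ Y i j i' j', ∀ x ∈ N, y * x * y⁻¹ ∈ N)
    {n : V ≃ₗ[F] V} (hnN : n ∈ N) : Commute i n ∧ Commute j n := by
  have ct : ∀ x ∈ N, Commute x (i * i) := fun x hx =>
    c1 c.hB c.h2 c.hab c.h N hN hiso hgood (hn i mi) (hn j mj) hx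
  have ct' : ∀ x ∈ N, Commute x (i' * i') := fun x hx =>
    c1 c.hB c.h2 c.hab c.h' N hN hiso hgood (hn i' mi') (hn j' mj') hx
  have key : ∀ u ∈ Y i j i' j', QE (i * i) u → Commute u n := by
    intro u hu hq
    have hdN : u * n * u⁻¹ * n⁻¹ ∈ N := N.mul_mem (hn u hu n hnN) (N.inv_mem hnN)
    have := c2_one c (hiso _ hdN) (hgood _ hdN) (ct _ hdN) (ct' _ hdN) (by
      intro x hx
      simp only [LinearEquiv.mul_apply]
      rw [hq.fxi (QP.C_of_comm (ct n hnN).inv_left hx), app_inv, hq.fx x hx])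
    rw [Commute, SemiconjBy]
    have h3 := mul_inv_eq_one.mp this
    exact mul_inv_eq_iff_eq_mul.mp h3
  exact ⟨key i mi (c.h.qei c.hB c.h2), key j mj (c.h.qej c.hB c.h2 c.hab)⟩

theorem comm_gen {n : V ≃ₗ[F] V} (h1 : Commute i n) (h2 : Commute j n) (h3 : Commute i' n)
    (h4 : Commute j' n) {y : V ≃ₗ[F] V} (hy : y ∈ Y i j i' j') : Commute y n := by
  induction hy using Subgroup.closure_induction with
  | mem g hx =>
    simp only [Set.mem_insert_iff, Set.mem_singleton_iff] at hx
    rcases hx with rfl | rfl | rfl | rfl <;> assumption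
  | one => exact Commute.one_left n
  | mul g y _ _ hx hy => exact hx.mul_left hy
  | inv g _ hx => exact hx.inv_left

theorem c2 (c : Ctx B a b w v i j w' v' i' j')
    (N : Subgroup (V ≃ₗ[F] V)) (hN : ∀ x ∈ N, ∀ y ∈ N, x * y = y * x)
    (hiso : ∀ x ∈ N, Iso B x) (hgood : ∀ x ∈ N, Good x)
    (hn : ∀ y ∈ Y i j i' j', ∀ x ∈ N, y * x * y⁻¹ ∈ N)
    {n : V ≃ₗ[F] V} (hnN : n ∈ N) {y : V ≃ₗ[F] V} (hy : y ∈ Y i j i' j') : Commute y n := by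
  have h1 := c.c2' N hN hiso hgood hn hnN
  have h2 := c.symm.c2' N hN hiso hgood (by rw [Y_symm]; exact hn) hnN
  exact comm_gen h1.1 h1.2 h2.1 h2.2 hy

/-- triviality criterion -/
theorem triv (c : Ctx B a b w v i j w' v' i' j') {n : V ≃ₗ[F] V} (hn : n ∈ Y i j i' j')
    (hgood : Good n) (h1 : ∀ x, (i * i) x = -x → n x = x) (h2 : ∀ x, (i' * i') x = -x → n x = x) :
    n = 1 := by
  ext x
  have hiso := c.isoY hn
  have key : n (n x - x) = n x - x := by
    apply c.fixY hn
    · rw [c.h.memC c.hB c.h2]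
      constructor
      · rw [map_sub, sub_eq_zero]
        nth_rewrite 1 [← h1 w c.h.Uw]
        rw [hiso]
      · rw [map_sub, sub_eq_zero]
        nth_rewrite 1 [← h1 v c.h.Uv]
        rw [hiso]
    · rw [c.h'.memC c.hB c.h2]
      constructor
      · rw [map_sub, sub_eq_zero]
        nth_rewrite 1 [← h2 w' c.h'.Uw]
        rw [hiso]
      · rw [map_sub, sub_eq_zero]
        nth_rewrite 1 [← h2 v' c.h'.Uv]
        rw [hiso]
  apply pp hgood
  rw [map_sub] at key
  linear_combination (norm := module) key

/-- some vector of the first plane is moved by the second involution; its displacement. -/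
theorem exists_moved (c : Ctx B a b w v i j w' v' i' j') :
    ∃ x, (i * i) x = -x ∧ (i' * i') x - x ≠ 0 ∧ (i' * i') ((i' * i') x - x) = -((i' * i') x - x) := by
  by_contra hcon
  push Not at hcon
  apply c.nc
  apply Commute.symm
  apply c.h.comm_of_U c.hB c.h2 (c.h'.ii.mul c.h'.ii)
  intro x hx
  have := hcon x hx
  by_cases h0 : (i' * i') x - x = 0
  · rw [sub_eq_zero.mp h0, hx]
  · exfalso
    apply this h0
    rw [map_sub, ← LinearEquiv.mul_apply, c.h'.tt c.hB]
    simp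

theorem c3 (c : Ctx B a b w v i j w' v' i' j') {n : V ≃ₗ[F] V} (hn : n ∈ Y i j i' j')
    (hgood : Good n) (hc : ∀ y ∈ Y i j i' j', Commute y n) :
    n = 1 ∨ ((∀ x, (i * i) x = -x → n x = -x) ∧ (∀ x, (i' * i') x = -x → n x = -x)) := by
  have hiso := c.isoY hn
  have app : ∀ y ∈ Y i j i' j', ∀ x, n (y x) = y (n x) := fun y hy x => by
    rw [← LinearEquiv.mul_apply, ← (hc y hy).eq]; rfl
  have mt : i * i ∈ Y i j i' j' := Subgroup.mul_mem _ mi mi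
  have mt' : i' * i' ∈ Y i j i' j' := Subgroup.mul_mem _ mi' mi'
  have s1 := c.h.scal c.hB c.h2 c.hab hiso (fun x hx => QP.U_of_comm (hc _ mt).symm hx)
    (fun x _ => app i mi x) (fun x _ => app j mj x)
  have s2 := c.h'.scal c.hB c.h2 c.hab hiso (fun x hx => QP.U_of_comm (hc _ mt').symm hx)
    (fun x _ => app i' mi' x) (fun x _ => app j' mj' x)
  obtain ⟨x, hx, hne, hx'⟩ := c.exists_moved
  have e : n ((i' * i') x - x) = (i' * i') (n x) - n x := by rw [map_sub, app _ mt']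
  rcases s1 with s1 | s1 <;> rcases s2 with s2 | s2
  · left; exact c.triv hn hgood s1 s2
  · exfalso
    rw [s2 _ hx', s1 x hx] at e
    exact hne (two_cancel c.h2 e.symm)
  · exfalso
    rw [s2 _ hx', s1 x hx] at e
    apply hne
    apply two_cancel c.h2
    rw [map_neg] at e
    linear_combination (norm := module) e
  · right; exact ⟨s1, s2⟩

end Ctx
end HallSp
namespace HallSp

theorem g1 {Q : Type*} [Group Q] {i j t : Q} (hi : i * i = t) (hj : j * j = t) (ht : t * t = 1)
    (hij : i * j = t * (j * i)) (A : Subgroup Q)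
    (hsq : ∀ x ∈ A, x * x = 1) (hAi : ∀ x ∈ A, i * x * i⁻¹ ∈ A) (hAj : ∀ x ∈ A, j * x * j⁻¹ ∈ A)
    {a : Q} (ha : a ∈ A) (ha1 : a ≠ 1) : ∃ x ∈ A, x ≠ 1 ∧ Commute i x ∧ Commute j x := by
  have hcomm_iff : ∀ u x : Q, u * x * u⁻¹ * x⁻¹ = 1 ↔ Commute u x := fun u x => by
    rw [mul_inv_eq_one, mul_inv_eq_iff_eq_mul]; rfl
  have hinv : ∀ x ∈ A, x⁻¹ = x := fun x hx => inv_eq_of_mul_eq_one_left (hsq x hx)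
  -- the commutator with an element acting as an involution is fixed
  have hfix : ∀ u, (∀ x ∈ A, u * x * u⁻¹ ∈ A) → ∀ x ∈ A, Commute (u * u) x →
      Commute u (u * x * u⁻¹ * x⁻¹) := by
    intro u hu x hx hc
    have hm := A.mul_mem (hu x hx) (A.inv_mem hx)
    have e : u * (u * x * u⁻¹ * x⁻¹) * u⁻¹ = u * x * u⁻¹ * x⁻¹ := by
      rw [← hinv _ hm]
      calc u * (u * x * u⁻¹ * x⁻¹)⁻¹ * u⁻¹ = (u * x * u⁻¹) * ((u * u) * x * (u * u)⁻¹)⁻¹ := by group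
        _ = (u * x * u⁻¹) * x⁻¹ := by rw [hc.eq]; group
        _ = (u * x * u⁻¹ * x⁻¹)⁻¹ := (hinv _ hm).symm
    exact mul_inv_eq_iff_eq_mul.mp e
  have hAt : ∀ x ∈ A, t * x * t⁻¹ ∈ A := fun x hx => by
    have := hAi _ (hAi x hx)
    rw [← hi]; convert this using 1; group
  have hit : Commute i t := by rw [← hi]; exact (Commute.refl i).mul_right (Commute.refl i)
  have hjt : Commute j t := by rw [← hj]; exact (Commute.refl j).mul_right (Commute.refl j)
  -- step 1
  obtain ⟨a1, h1A, h11, h1t⟩ : ∃ x ∈ A, x ≠ 1 ∧ Commute t x := by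
    by_cases h : t * a * t⁻¹ * a⁻¹ = 1
    · exact ⟨a, ha, ha1, (hcomm_iff _ _).mp h⟩
    · exact ⟨_, A.mul_mem (hAt a ha) (A.inv_mem ha), h, hfix t hAt a ha (by rw [ht]; exact Commute.one_left a)⟩
  obtain ⟨a2, h2A, h21, h2t, h2i⟩ : ∃ x ∈ A, x ≠ 1 ∧ Commute t x ∧ Commute i x := by
    by_cases h : i * a1 * i⁻¹ * a1⁻¹ = 1
    · exact ⟨a1, h1A, h11, h1t, (hcomm_iff _ _).mp h⟩
    · refine ⟨_, A.mul_mem (hAi a1 h1A) (A.inv_mem h1A), h, ?_, hfix i hAi a1 h1A (by rw [hi]; exact h1t)⟩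
      exact ((hit.symm.mul_right h1t).mul_right hit.symm.inv_right).mul_right h1t.inv_right
  by_cases h : j * a2 * j⁻¹ * a2⁻¹ = 1
  · exact ⟨a2, h2A, h21, h2i, (hcomm_iff _ _).mp h⟩
  · refine ⟨_, A.mul_mem (hAj a2 h2A) (A.inv_mem h2A), h, ?_, hfix j hAj a2 h2A (by rw [hj]; exact h2t)⟩
    apply Commute.mul_right _ h2i.inv_right
    have e : i * (j * a2 * j⁻¹) * i⁻¹ = j * a2 * j⁻¹ := by
      calc i * (j * a2 * j⁻¹) * i⁻¹ = (i * j) * a2 * (i * j)⁻¹ := by group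
        _ = t * (j * (i * a2 * i⁻¹) * j⁻¹) * t⁻¹ := by rw [hij]; group
        _ = t * (j * a2 * j⁻¹) * t⁻¹ := by rw [h2i.eq]; group
        _ = j * a2 * j⁻¹ := by
          have : Commute t (j * a2 * j⁻¹) := (hjt.symm.mul_right h2t).mul_right hjt.symm.inv_right
          rw [this.eq]; group
    exact mul_inv_eq_iff_eq_mul.mp e

/-- The same modulo a central involution. -/
theorem g1z {G : Type*} [Group G] {i j t z : G} (hi : i * i = t) (hj : j * j = t) (ht : t * t = 1)
    (hij : i * j = t * (j * i)) (hz : z * z = 1) (hzc : ∀ y, Commute y z) (M : Subgroup G)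
    (hsq : ∀ x ∈ M, x * x = 1 ∨ x * x = z) (hMi : ∀ x ∈ M, i * x * i⁻¹ ∈ M)
    (hMj : ∀ x ∈ M, j * x * j⁻¹ ∈ M)
    {a : G} (ha : a ∈ M) (ha1 : a ≠ 1) (haz : a ≠ z) :
    ∃ x ∈ M, x ≠ 1 ∧ x ≠ z ∧ (i * x = x * i ∨ i * x = z * (x * i)) ∧
      (j * x = x * j ∨ j * x = z * (x * j)) := by
  let Z : Subgroup G := Subgroup.zpowers z
  have hZ : ∀ x, x ∈ Z ↔ x = 1 ∨ x = z := by
    intro x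
    constructor
    · rintro ⟨n, rfl⟩
      simp only
      rcases Int.even_or_odd' n with ⟨k, rfl | rfl⟩
      · left; rw [_root_.zpow_mul]; simp [zpow_ofNat, pow_two, hz]
      · right; rw [_root_.zpow_add, _root_.zpow_mul]; simp [zpow_ofNat, pow_two, hz]
    · rintro (rfl | rfl)
      · exact Z.one_mem
      · exact Subgroup.mem_zpowers _
  have : Z.Normal := ⟨fun n hn g => by
    rcases (hZ n).mp hn with rfl | rfl
    · rw [mul_one, mul_inv_cancel]; exact Z.one_mem
    · rw [(hzc g).eq, mul_assoc, mul_inv_cancel, mul_one]; exact hn⟩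
  let f : G →* G ⧸ Z := QuotientGroup.mk' Z
  have f1 : ∀ x, f x = 1 ↔ x = 1 ∨ x = z := fun x => by
    rw [← hZ]; exact QuotientGroup.eq_one_iff x
  have feq : ∀ x y, f x = f y → x = y ∨ x = z * y := fun x y h => by
    have : f (x * y⁻¹) = 1 := by rw [map_mul, map_inv, h, mul_inv_cancel]
    rcases (f1 _).mp this with h | h
    · left; exact mul_inv_eq_one.mp h
    · right; exact mul_inv_eq_iff_eq_mul.mp h
  obtain ⟨x, hx, hx1, hxi, hxj⟩ := g1 (i := f i) (j := f j) (t := f t) (a := f a)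
    (by rw [← map_mul, hi]) (by rw [← map_mul, hj]) (by rw [← map_mul, ht, map_one])
    (by rw [← map_mul, hij, map_mul, map_mul]) (M.map f)
    (by
      rintro _ ⟨x, hx, rfl⟩
      rw [← map_mul]; exact (f1 _).mpr (hsq x hx))
    (by
      rintro _ ⟨x, hx, rfl⟩
      exact ⟨_, hMi x hx, by simp⟩)
    (by
      rintro _ ⟨x, hx, rfl⟩
      exact ⟨_, hMj x hx, by simp⟩)
    ⟨a, ha, rfl⟩ (by rw [Ne, f1]; tauto)
  obtain ⟨m, hm, rfl⟩ := hx
  rw [Ne, f1, not_or] at hx1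
  refine ⟨m, hm, hx1.1, hx1.2, feq _ _ ?_, feq _ _ ?_⟩
  · rw [map_mul, map_mul]; exact hxi.eq
  · rw [map_mul, map_mul]; exact hxj.eq

variable {F V : Type*} [Field F] [AddCommGroup V] [Module F V]
variable {B : LinearMap.BilinForm F V} {a b : F} {w v : V} {i j : V ≃ₗ[F] V}
  {w' v' : V} {i' j' : V ≃ₗ[F] V}

/-- the extraspecial-like section. -/
structure Core (i j i' j' : V ≃ₗ[F] V) (M : Subgroup (V ≃ₗ[F] V)) (z : V ≃ₗ[F] V) : Prop where
  le : M ≤ Ctx.Y i j i' j'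
  nrm : ∀ y ∈ Ctx.Y i j i' j', ∀ m ∈ M, y * m * y⁻¹ ∈ M
  zM : z ∈ M
  zc : ∀ y ∈ Ctx.Y i j i' j', Commute y z
  zz : z * z = 1
  zU : ∀ x, (i * i) x = -x → z x = -x
  zU' : ∀ x, (i' * i') x = -x → z x = -x
  com : ∀ x ∈ M, ∀ y ∈ M, x * y = y * x ∨ x * y = z * (y * x)
  sq : ∀ m ∈ M, m * m = 1 ∨ m * m = z
  ex : ∃ m ∈ M, m ≠ 1 ∧ m ≠ z

theorem Core.symm {M : Subgroup (V ≃ₗ[F] V)} {z : V ≃ₗ[F] V} (k : Core i j i' j' M z) :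
    Core i' j' i j M z :=
  ⟨by rw [Ctx.Y_symm]; exact k.le, by rw [Ctx.Y_symm]; exact k.nrm, k.zM,
    by rw [Ctx.Y_symm]; exact k.zc, k.zz, k.zU', k.zU, k.com, k.sq, k.ex⟩

/-- the derived series inside the ambient group -/
def D {G : Type*} [Group G] (Y : Subgroup G) : ℕ → Subgroup G
  | 0 => Y
  | n + 1 => ⁅D Y n, D Y n⁆

theorem D_eq {G : Type*} [Group G] (Y : Subgroup G) (n : ℕ) :
    D Y n = (derivedSeries Y n).map Y.subtype := by
  induction n with
  | zero => simp [D, ← MonoidHom.range_eq_map]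
  | succ n ih => rw [D, ih, derivedSeries_succ, Subgroup.map_commutator]

theorem D_le {G : Type*} [Group G] (Y : Subgroup G) (n : ℕ) : D Y n ≤ Y := by
  rw [D_eq]; exact Subgroup.map_subtype_le _

theorem D_nrm {G : Type*} [Group G] (Y : Subgroup G) (n : ℕ) {y m : G} (hy : y ∈ Y)
    (hm : m ∈ D Y n) : y * m * y⁻¹ ∈ D Y n := by
  rw [D_eq] at hm ⊢
  obtain ⟨x, hx, rfl⟩ := hm
  exact ⟨⟨y, hy⟩ * x * ⟨y, hy⟩⁻¹, (derivedSeries_normal Y n).conj_mem x hx _, rfl⟩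

theorem exists_core (c : Ctx B a b w v i j w' v' i' j')
    (hgood : ∀ y ∈ Ctx.Y i j i' j', Good y)
    (hsol : ∃ n, D (Ctx.Y i j i' j') n = ⊥) : ∃ M z, Core i j i' j' M z := by
  classical
  have hP : ∃ n, ∀ m ∈ D (Ctx.Y i j i' j') n, ∀ y ∈ Ctx.Y i j i' j', Commute y m := by
    obtain ⟨n, hn⟩ := hsol
    refine ⟨n, fun m hm y _ => ?_⟩
    rw [hn, Subgroup.mem_bot] at hm
    rw [hm]; exact Commute.one_right y
  obtain ⟨k, hk, hk1⟩ : ∃ k, (¬ ∀ m ∈ D (Ctx.Y i j i' j') k, ∀ y ∈ Ctx.Y i j i' j', Commute y m) ∧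
      ∀ m ∈ D (Ctx.Y i j i' j') (k + 1), ∀ y ∈ Ctx.Y i j i' j', Commute y m := by
    have h1 := Nat.find_spec hP
    have h2 := fun m => @Nat.find_min _ _ hP m
    rcases h0 : Nat.find hP with _ | k
    · rw [h0] at h1
      exact absurd (h1 _ (Subgroup.mul_mem _ Ctx.mi' Ctx.mi') _ (Subgroup.mul_mem _ Ctx.mi Ctx.mi)) c.nc
    · refine ⟨k, h2 k (by omega), ?_⟩
      rw [h0] at h1; exact h1
  obtain ⟨M, hMd⟩ : ∃ M, M = D (Ctx.Y i j i' j') k := ⟨_, rfl⟩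
  rw [← hMd] at hk
  have hMle : M ≤ Ctx.Y i j i' j' := hMd ▸ D_le _ k
  have hMn : ∀ y ∈ Ctx.Y i j i' j', ∀ m ∈ M, y * m * y⁻¹ ∈ M := by
    intro y hy m hm; rw [hMd] at hm ⊢; exact D_nrm _ k hy hm
  have hcm : ∀ x ∈ M, ∀ y ∈ M, x * y * x⁻¹ * y⁻¹ ∈ D (Ctx.Y i j i' j') (k + 1) := by
    intro x hx y hy
    rw [D, ← hMd]
    exact Subgroup.commutator_mem_commutator hx hy
  have hnab : ∃ x ∈ M, ∃ y ∈ M, x * y ≠ y * x := by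
    by_contra hcon
    push Not at hcon
    apply hk
    intro m hm y hy
    exact c.c2 M hcon (fun x hx => c.isoY (hMle hx)) (fun x hx => hgood x (hMle hx)) hMn hm hy
  obtain ⟨x, hx, y, hy, hxy⟩ := hnab
  obtain ⟨z, hz⟩ : ∃ z, z = x * y * x⁻¹ * y⁻¹ := ⟨_, rfl⟩
  have hzD : z ∈ D (Ctx.Y i j i' j') (k + 1) := hz ▸ hcm x hx y hy
  have hzM : z ∈ M := by
    rw [hz]; exact M.mul_mem (M.mul_mem (M.mul_mem hx hy) (M.inv_mem hx)) (M.inv_mem hy)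
  have hz1 : z ≠ 1 := by
    rw [hz, Ne, mul_inv_eq_one, mul_inv_eq_iff_eq_mul]; exact hxy
  have hzc := hk1 z hzD
  obtain ⟨zU, zU'⟩ := (c.c3 (hMle hzM) (hgood z (hMle hzM)) hzc).resolve_left hz1
  have hprod : ∀ n ∈ Ctx.Y i j i' j', (∀ x, (i * i) x = -x → n x = -x) →
      (∀ x, (i' * i') x = -x → n x = -x) → n * z = 1 := by
    intro n hn h1 h2
    have hmem := Subgroup.mul_mem _ hn (hMle hzM)
    apply c.triv hmem (hgood _ hmem)
    · intro x hx
      rw [LinearEquiv.mul_apply, zU x hx, map_neg, h1 x hx, neg_neg]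
    · intro x hx
      rw [LinearEquiv.mul_apply, zU' x hx, map_neg, h2 x hx, neg_neg]
  have zz := hprod z (hMle hzM) zU zU'
  have huniq : ∀ n ∈ Ctx.Y i j i' j', (∀ y ∈ Ctx.Y i j i' j', Commute y n) → n = 1 ∨ n = z := by
    intro n hn hc
    rcases c.c3 hn (hgood n hn) hc with h | h
    · left; exact h
    · right
      have := hprod n hn h.1 h.2
      rw [← zz] at this
      exact mul_right_cancel this
  have hcom : ∀ x ∈ M, ∀ y ∈ M, x * y = y * x ∨ x * y = z * (y * x) := by
    intro x hx y hy
    have hD := hcm x hx y hy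
    have hmem : x * y * x⁻¹ * y⁻¹ ∈ M :=
      M.mul_mem (M.mul_mem (M.mul_mem hx hy) (M.inv_mem hx)) (M.inv_mem hy)
    rcases huniq _ (hMle hmem) (hk1 _ hD) with h | h
    · left; rw [mul_inv_eq_one, mul_inv_eq_iff_eq_mul] at h; exact h
    · right; rw [mul_inv_eq_iff_eq_mul, mul_inv_eq_iff_eq_mul] at h; rw [h, mul_assoc]
  -- the centre of M
  let N : Subgroup (V ≃ₗ[F] V) :=
    { carrier := {n | n ∈ M ∧ ∀ y ∈ M, Commute y n}
      one_mem' := ⟨M.one_mem, fun y _ => Commute.one_right y⟩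
      mul_mem' := fun h1 h2 => ⟨M.mul_mem h1.1 h2.1, fun y hy => (h1.2 y hy).mul_right (h2.2 y hy)⟩
      inv_mem' := fun h1 => ⟨M.inv_mem h1.1, fun y hy => (h1.2 y hy).inv_right⟩ }
  have hNY : ∀ n ∈ N, n = 1 ∨ n = z := by
    intro n hn
    apply huniq n (hMle hn.1)
    intro y hy
    refine c.c2 N (fun p hp q hq => (hq.2 p hp.1).eq) (fun p hp => c.isoY (hMle hp.1))
      (fun p hp => hgood p (hMle hp.1)) ?_ hn hy
    intro g hg p hp
    refine ⟨hMn g hg p hp.1, fun q hq => ?_⟩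
    have h1 : g⁻¹ * q * g⁻¹⁻¹ ∈ M := hMn _ (Subgroup.inv_mem _ hg) q hq
    have h2 := (hp.2 _ h1).eq
    have h3 : q * (g * p * g⁻¹) = g * ((g⁻¹ * q * g⁻¹⁻¹) * p) * g⁻¹ := by group
    rw [Commute, SemiconjBy, h3, h2]; group
  refine ⟨M, z, hMle, hMn, hzM, hzc, zz, zU, zU', hcom, ?_, ⟨x, hx, ?_, ?_⟩⟩
  · intro m hm
    apply hNY
    refine ⟨M.mul_mem hm hm, fun y hy => ?_⟩
    rcases hcom y hy m hm with h | h
    · exact Commute.mul_right h h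
    · rw [Commute, SemiconjBy]
      have hzm := (hzc m (hMle hm)).eq
      calc y * (m * m) = y * m * m := by group
        _ = z * (m * y) * m := by rw [h]
        _ = z * m * (y * m) := by group
        _ = z * m * (z * (m * y)) := by rw [h]
        _ = z * (m * z) * (m * y) := by group
        _ = (z * z) * (m * m * y) := by rw [hzm]; group
        _ = m * m * y := by rw [zz, one_mul]
  · rintro rfl; apply hxy; simp
  · rintro rfl; exact hxy (hzc y (hMle hy)).symm.eq

end HallSp
namespace HallSp

variable {F V : Type*} [Field F] [AddCommGroup V] [Module F V]
variable {B : LinearMap.BilinForm F V} {a b : F} {w v : V} {i j : V ≃ₗ[F] V}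
  {w' v' : V} {i' j' : V ≃ₗ[F] V} {M : Subgroup (V ≃ₗ[F] V)} {z : V ≃ₗ[F] V}

theorem Core.getm (k : Core i j i' j' M z) (c : Ctx B a b w v i j w' v' i' j') :
    ∃ x ∈ M, x ≠ 1 ∧ x ≠ z ∧ (i * x = x * i ∨ i * x = z * (x * i)) ∧
      (j * x = x * j ∨ j * x = z * (x * j)) := by
  obtain ⟨m, hm, hm1, hmz⟩ := k.ex
  let Y := Ctx.Y i j i' j'
  obtain ⟨x, hx, h1, h2, h3, h4⟩ := g1z (G := ↥Y) (i := ⟨i, Ctx.mi⟩) (j := ⟨j, Ctx.mj⟩)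
    (t := ⟨i * i, Y.mul_mem Ctx.mi Ctx.mi⟩) (z := ⟨z, k.le k.zM⟩) (a := ⟨m, k.le hm⟩)
    rfl (Subtype.ext (c.h.jj c.hB c.hab)) (Subtype.ext (c.h.tt c.hB))
    (Subtype.ext (c.h.anticomm c.hB)) (Subtype.ext k.zz)
    (fun y => Subtype.ext (k.zc y.1 y.2).eq) (M.subgroupOf Y)
    (fun x hx => by
      rcases k.sq x.1 hx with h | h
      · left; exact Subtype.ext h
      · right; exact Subtype.ext h)
    (fun x hx => k.nrm i Ctx.mi x.1 hx)
    (fun x hx => k.nrm j Ctx.mj x.1 hx)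
    hm (fun h => hm1 (congrArg Subtype.val h)) (fun h => hmz (congrArg Subtype.val h))
  refine ⟨x.1, hx, fun h => h1 (Subtype.ext h), fun h => h2 (Subtype.ext h), ?_, ?_⟩
  · rcases h3 with h | h
    · left; exact congrArg Subtype.val h
    · right; exact congrArg Subtype.val h
  · rcases h4 with h | h
    · left; exact congrArg Subtype.val h
    · right; exact congrArg Subtype.val h

theorem Core.c5 (k : Core i j i' j' M z) (c : Ctx B a b w v i j w' v' i' j')
    (hgood : ∀ y ∈ Ctx.Y i j i' j', Good y) : i * i ∈ M := by
  obtain ⟨t, ht⟩ : ∃ t, t = i * i := ⟨_, rfl⟩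
  have htY : t ∈ Ctx.Y i j i' j' := by rw [ht]; exact Subgroup.mul_mem _ Ctx.mi Ctx.mi
  have htt : ∀ x, t (t x) = x := fun x => by
    rw [← LinearEquiv.mul_apply, ht, c.h.tt c.hB]; rfl
  have qi : QE t i := ht ▸ c.h.qei c.hB c.h2
  have qj : QE t j := ht ▸ c.h.qej c.hB c.h2 c.hab
  have zapp : ∀ y ∈ Ctx.Y i j i' j', ∀ x, z (y x) = y (z x) := fun y hy x => by
    rw [← LinearEquiv.mul_apply, ← (k.zc y hy).eq]; rfl
  have zt : ∀ x, z (t x) = t (z x) := zapp t htY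
  have hSmk : ∀ y, (i' * i') y = -y → t (y + t y) = y + t y ∧ z (y + t y) = -(y + t y) := by
    intro y hy
    constructor
    · rw [map_add, htt]; abel
    · rw [map_add, zt, k.zU' y hy, map_neg]; abel
  obtain ⟨y0, hy0, hy0ne⟩ : ∃ y, (i' * i') y = -y ∧ y + t y ≠ 0 := by
    obtain ⟨x, hx, hne, -⟩ := c.symm.exists_moved
    by_contra hcon
    push Not at hcon
    apply c.nc
    apply c.h'.comm_of_U c.hB c.h2 (c.h.ii.mul c.h.ii)
    intro y hy
    have := hcon y hy
    rw [← ht, show t y = -y from (neg_eq_of_add_eq_zero_right this).symm, map_neg, hy]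
  obtain ⟨hx0t, hx0z⟩ := hSmk y0 hy0
  obtain ⟨m0, hm0, hm01, hm0z, hmi, hmj⟩ := k.getm c
  have hm0t : Commute t m0 := by
    rw [ht, Commute, SemiconjBy]
    rcases hmi with h | h
    · rw [mul_assoc, h, ← mul_assoc, h, mul_assoc]
    · have hz := (k.zc i Ctx.mi).eq
      calc i * i * m0 = i * (i * m0) := by group
        _ = (i * z) * (m0 * i) := by rw [h]; group
        _ = z * (i * m0) * i := by rw [hz]; group
        _ = (z * z) * (m0 * (i * i)) := by rw [h]; group
        _ = _ := by rw [k.zz, one_mul]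
  have hcu : ∀ u ∈ Ctx.Y i j i' j', QE t u → (u * m0 = m0 * u ∨ u * m0 = z * (m0 * u)) →
      Commute u m0 := by
    intro u hu hq h
    rcases h with h | h
    · exact h
    · exfalso
      have e := LinearEquiv.congr_fun h (y0 + t y0)
      simp only [LinearEquiv.mul_apply] at e
      rw [hq.fx _ hx0t, hq.fx _ (QP.C_of_comm hm0t.symm hx0t), zapp m0 (k.le hm0), hx0z, map_neg] at e
      have := two_cancel c.h2 e
      rw [LinearEquiv.map_eq_zero_iff] at this
      exact hy0ne this
  have hci := hcu i Ctx.mi qi hmi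
  have hcj := hcu j Ctx.mj qj hmj
  -- normalise the sign
  obtain ⟨m, hm, hm1, hmt, hmU⟩ : ∃ m ∈ M, m ≠ 1 ∧ Commute t m ∧ ∀ x, t x = -x → m x = x := by
    have hs := c.h.scal c.hB c.h2 c.hab (c.isoY (k.le hm0))
      (fun x hx => QP.U_of_comm (ht ▸ hm0t.symm) hx)
      (fun x _ => by rw [← LinearEquiv.mul_apply, ← hci.eq]; rfl)
      (fun x _ => by rw [← LinearEquiv.mul_apply, ← hcj.eq]; rfl)
    rw [← ht] at hs
    rcases hs with hs | hs
    · exact ⟨m0, hm0, hm01, hm0t, hs⟩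
    · refine ⟨m0 * z, M.mul_mem hm0 k.zM, ?_, hm0t.mul_right (k.zc t htY), ?_⟩
      · intro h
        apply hm0z
        rw [← k.zz] at h
        exact mul_right_cancel h
      · intro x hx
        rw [LinearEquiv.mul_apply, k.zU x (ht ▸ hx), map_neg, hs x hx, neg_neg]
  have hmY := k.le hm
  have hiso := c.isoY hmY
  have htw : t w = -w := ht ▸ c.h.Uw
  have hmm : m * m = 1 := by
    refine (k.sq m hm).resolve_right fun h => ?_
    have e := LinearEquiv.congr_fun h w
    rw [LinearEquiv.mul_apply, hmU w htw, hmU w htw, k.zU w c.h.Uw] at e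
    exact c.h.w_ne (two_cancel c.h2 e)
  -- the second plane
  have htiso : Iso B t := by rw [ht]; exact c.h.ii.mul c.h.ii
  have hdouble : ∀ x y, t y = y → B (x + t x) y = 2 * B x y := by
    intro x y hy
    have := htiso x y
    rw [hy] at this
    rw [map_add, LinearMap.add_apply, this]; ring
  have hzero : ∀ y, t y = y → z y = -y → B (w' + t w') y = 0 → B (v' + t v') y = 0 → y = 0 := by
    intro y hy hzy h1 h2
    rw [hdouble _ _ hy] at h1 h2
    have h1' := (mul_eq_zero.mp h1).resolve_left c.h2
    have h2' := (mul_eq_zero.mp h2).resolve_left c.h2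
    have := c.fixY (k.le k.zM) (x := y) (ht ▸ hy) ((c.h'.memC c.hB c.h2).mpr ⟨h1', h2'⟩)
    rw [hzy] at this
    exact two_cancel c.h2 this.symm
  obtain ⟨hpt, hpz⟩ := hSmk w' c.h'.Uw
  obtain ⟨hrt, hrz⟩ := hSmk v' c.h'.Uv
  have hpr : B (w' + t w') (v' + t v') ≠ 0 := by
    intro h0
    have h0' : B (v' + t v') (w' + t w') = 0 := by rw [anti c.hB, h0, neg_zero]
    have hp := hzero _ hpt hpz (c.hB _) h0'
    have hr := hzero _ hrt hrz h0 (c.hB _)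
    apply hy0ne
    obtain ⟨α, β, rfl⟩ := (c.h'.memU c.hB c.h2).mp hy0
    rw [map_add, map_smul, map_smul]
    linear_combination (norm := module) α • hp + β • hr
  have hspan : ∀ x, t x = x → z x = -x → ∃ α β : F, x = α • (w' + t w') + β • (v' + t v') := by
    intro x h1 h2
    obtain ⟨α, β, e, he, e1, e2⟩ := decomp c.hB hpr x
    have he' : e = x - (α • (w' + t w') + β • (v' + t v')) := by rw [he]; abel
    have : e = 0 := by
      apply hzero e _ _ e1 e2
      · rw [he', map_sub, map_add, map_smul, map_smul, h1, hpt, hrt]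
      · rw [he', map_sub, map_add, map_smul, map_smul, h2, hpz, hrz]; module
    exact ⟨α, β, by rw [he, this, add_zero]⟩
  have hmS : ∀ x, t x = x → z x = -x → t (m x) = m x ∧ z (m x) = -(m x) := fun x h1 h2 =>
    ⟨QP.C_of_comm hmt.symm h1, by rw [zapp m hmY, h2, map_neg]⟩
  obtain ⟨s1, s2, hs⟩ := hspan _ (hmS _ hpt hpz).1 (hmS _ hpt hpz).2
  obtain ⟨u1, u2, hu⟩ := hspan _ (hmS _ hrt hrz).1 (hmS _ hrt hrz).2
  obtain ⟨τ, hτ⟩ := quad_plane c.hB hpr hiso hs hu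
  have hsgn := QP.sign_of_quad (S := fun x => t x = x ∧ z x = -x) hiso c.h2 ⟨hpt, hpz⟩ ⟨hrt, hrz⟩ hpr
    (fun x _ => by rw [← LinearEquiv.mul_apply, hmm]; rfl) (τ := τ) (fun x hx => by
      obtain ⟨α, β, rfl⟩ := hspan x hx.1 hx.2
      exact hτ α β)
  -- criterion for being trivial
  have htriv : ∀ n ∈ Ctx.Y i j i' j', (∀ x, t x = -x → n x = x) →
      (∀ x, t x = x ∧ z x = -x → n x = x) → n = 1 := by
    intro n hn h1 h2
    apply c.triv hn (hgood n hn) (fun x hx => h1 x (ht ▸ hx))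
    intro y hy
    have e1 := h2 _ (hSmk y hy)
    have e2 := h1 (y - t y) (by rw [map_sub, htt]; abel)
    rw [map_add] at e1
    rw [map_sub] at e2
    have : (2 : F) • (n y - y) = 0 := by linear_combination (norm := module) e1 + e2
    exact sub_eq_zero.mp ((smul_eq_zero.mp this).resolve_left c.h2)
  rcases hsgn with hs | hs
  · exact absurd (htriv m hmY hmU hs) hm1
  · have hmem : m * (t * z) ∈ Ctx.Y i j i' j' :=
      Subgroup.mul_mem _ hmY (Subgroup.mul_mem _ htY (k.le k.zM))
    have := htriv _ hmem
      (fun x hx => by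
        rw [LinearEquiv.mul_apply, LinearEquiv.mul_apply, k.zU x (ht ▸ hx), map_neg, hx, neg_neg,
          hmU x hx])
      (fun x hx => by
        rw [LinearEquiv.mul_apply, LinearEquiv.mul_apply, hx.2, map_neg, hx.1, map_neg, hs x hx,
          neg_neg])
    have e : t = m⁻¹ * z⁻¹ := by
      calc t = m⁻¹ * (m * (t * z)) * z⁻¹ := by group
        _ = m⁻¹ * z⁻¹ := by rw [this, mul_one]
    rw [← ht, e]
    exact M.mul_mem (M.inv_mem hm) (M.inv_mem k.zM)

end HallSp
namespace HallSp

theorem braid_comm {G : Type*} [Group G] {u v : G} (h : u * v * u = v * u * v) {k : ℕ}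
    (h3 : ¬ 3 ∣ k) (hk : (u * v) ^ k = 1) : u = v := by
  have hcube : (u * v) ^ 3 = (u * v * u) * (u * v * u) := by
    nth_rewrite 2 [h]
    simp only [pow_succ, pow_zero, one_mul, mul_assoc]
  have d1 : u * (u * v * u) = (u * v * u) * v := by
    nth_rewrite 1 [h]; simp only [mul_assoc]
  have d2 : v * (u * v * u) = (u * v * u) * u := by
    nth_rewrite 2 [h]; simp only [mul_assoc]
  have hc : Commute u ((u * v) ^ 3) := by
    rw [hcube, Commute, SemiconjBy, ← mul_assoc, d1, mul_assoc, d2]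
    simp only [mul_assoc]
  obtain ⟨l, hl⟩ : ∃ l, (u * v) ^ (3 * l + 1) = 1 := by
    have : k % 3 = 1 ∨ k % 3 = 2 := by omega
    rcases this with e | e
    · exact ⟨k / 3, by rw [show 3 * (k / 3) + 1 = k by omega]; exact hk⟩
    · refine ⟨(2 * k) / 3, ?_⟩
      rw [show 3 * (2 * k / 3) + 1 = k * 2 by omega, pow_mul, hk, one_pow]
  have hc2 : Commute u (u * v) := by
    rw [pow_succ, pow_mul] at hl
    rw [eq_inv_of_mul_eq_one_right hl]
    exact (hc.pow_right l).inv_right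
  have hc3 : Commute u v := by
    have := hc2.eq
    rw [mul_assoc u v u] at this
    exact mul_left_cancel this
  rw [mul_assoc, ← hc3.eq, mul_assoc u v v] at h
  exact mul_right_cancel (mul_left_cancel h)

variable {F V : Type*} [Field F] [AddCommGroup V] [Module F V]
variable {B : LinearMap.BilinForm F V} {a b : F} {w v : V} {i j : V ≃ₗ[F] V}
  {w' v' : V} {i' j' : V ≃ₗ[F] V} {M : Subgroup (V ≃ₗ[F] V)} {z : V ≃ₗ[F] V}

theorem braid_half (h2 : (2 : F) ≠ 0) {t t' u v d : V ≃ₗ[F] V} (htt' : ∀ x, t' (t' x) = x)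
    (hu : ∀ x, t x = -x → u x = d x)
    (hu1 : ∀ x, t x = x → u x = x) (hv : ∀ x, t' x = -x → v x = d x)
    (hv1 : ∀ x, t' x = x → v x = x) (hdt : Commute d t)
    (hUC : ∀ x, t x = -x → t (t' x) = t' x)
    (hdd : ∀ x, t x = -x → d (d x) = -x) {y : V} (hy : t y = -y) : u (v y) = v y - y := by
  have e1 := hv (y - t' y) (by rw [map_sub, htt']; abel)
  have e2 := hv1 (y + t' y) (by rw [map_add, htt']; abel)
  have e : (2 : F) • v y = d y - d (t' y) + y + t' y := by
    rw [map_sub, map_sub] at e1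
    rw [map_add] at e2
    linear_combination (norm := module) e1 + e2
  have k1 := hu (d y) (QP.U_of_comm hdt hy)
  have k2 := hu1 _ (QP.C_of_comm hdt (hUC y hy))
  have k3 := hu y hy
  have k4 := hu1 _ (hUC y hy)
  have f := congrArg u e
  rw [map_smul, map_add, map_add, map_sub, k1, k2, k3, k4, hdd y hy] at f
  have : (2 : F) • (u (v y) - (v y - y)) = 0 := by linear_combination (norm := module) f - e
  exact sub_eq_zero.mp ((smul_eq_zero.mp this).resolve_left h2)

theorem braid_full {t t' u v : V ≃ₗ[F] V} (ht : ∀ x, t (t x) = x) (ht' : ∀ x, t' (t' x) = x)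
    (qu : QE t u) (qv : QE t' v) (h2 : (2 : F) ≠ 0)
    (h1 : ∀ y, t y = -y → u (v y) = v y - y) (h3 : ∀ y, t' y = -y → v (u y) = u y - y) :
    u * v * u = v * u * v := by
  have hd : ∀ {t u : V ≃ₗ[F] V}, (∀ x, t (t x) = x) → QE t u → ∀ x, t (u x - x) = -(u x - x) := by
    intro t u ht qu x
    have e := qu.fx (x + t x) (by rw [map_add, ht]; abel)
    have e1 : t (u x) = u (t x) := by rw [← LinearEquiv.mul_apply, ← qu.comm.eq]; rfl
    rw [map_add] at e
    rw [map_sub, e1]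
    linear_combination (norm := module) e
  ext x
  simp only [LinearEquiv.mul_apply]
  have k1 := h1 _ (hd ht qu x)
  have k3 := h3 _ (hd ht' qv x)
  simp only [map_sub] at k1 k3
  linear_combination (norm := module) k1 - k3

theorem Core.tcomm (k : Core i j i' j' M z) (c : Ctx B a b w v i j w' v' i' j')
    (ht : i * i ∈ M) (ht' : i' * i' ∈ M) {x : V} (hx : (i * i) x = -x) :
    (i * i) ((i' * i') x) = (i' * i') x := by
  have h := (k.com _ ht _ ht').resolve_left c.nc
  have e := LinearEquiv.congr_fun h x
  rw [LinearEquiv.mul_apply (i * i) (i' * i')] at e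
  rw [e, LinearEquiv.mul_apply z, LinearEquiv.mul_apply (i' * i') (i * i), hx, map_neg, map_neg,
    ← LinearEquiv.mul_apply z, ← (k.zc _ (k.le ht')).eq, LinearEquiv.mul_apply, k.zU x hx, map_neg,
    neg_neg]

/-- the lift of an element of the quaternion group into the section. -/
theorem Core.lift (k : Core i j i' j' M z) (c : Ctx B a b w v i j w' v' i' j')
    (ht : i * i ∈ M) (ht' : i' * i' ∈ M) {u : V ≃ₗ[F] V} (hu : u ∈ Ctx.Y i j i' j')
    (qu : QE (i * i) u) : ∃ d ∈ M, (∀ x, (i * i) x = -x → d x = u x) ∧ Commute d (i * i) ∧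
      Commute d (i' * i') := by
  obtain ⟨t, et⟩ : ∃ t, t = i * i := ⟨_, rfl⟩
  obtain ⟨t', et'⟩ : ∃ t', t' = i' * i' := ⟨_, rfl⟩
  have hUC : ∀ x, t x = -x → t (t' x) = t' x := by
    rw [et, et']; exact fun x hx => k.tcomm c ht ht' hx
  have ht'2 : ∀ x, t' (t' x) = x := fun x => by
    rw [← LinearEquiv.mul_apply, et', c.h'.tt c.hB]; rfl
  have htw : t w = -w := et ▸ c.h.Uw
  have hmem : u * t' * u⁻¹ * (t * t'⁻¹) ∈ M :=
    M.mul_mem (k.nrm u hu _ (et' ▸ ht')) (M.mul_mem (et ▸ ht) (M.inv_mem (et' ▸ ht')))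
  have t'inv : t'⁻¹ = t' := by rw [et']; exact inv_eq_of_mul_eq_one_left (c.h'.tt c.hB)
  have hd : ∀ x, (u * t' * u⁻¹ * (t * t'⁻¹)) x = u (t' (u (t' x))) := by
    intro x
    have : u * t' * u⁻¹ * (t * t'⁻¹) = u * (t' * (u * t')) := by
      rw [t'inv, et, ← qu.sq]; group
    rw [this]; simp only [LinearEquiv.mul_apply]
  rw [← et] at qu
  have hdU : ∀ x, t x = -x → u (t' (u (t' x))) = u x := by
    intro x hx
    rw [qu.fx _ (hUC x hx), ht'2]
  have huw : t (u w) = -u w := qu.U htw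
  have hne : u w ≠ 0 := by
    rw [Ne, LinearEquiv.map_eq_zero_iff]; exact c.h.w_ne
  have zt' : ∀ x, z (t' x) = t' (z x) := fun x => by
    rw [← LinearEquiv.mul_apply, ← (k.zc t' (et' ▸ k.le ht')).eq]; rfl
  rw [← et, ← et']
  refine ⟨_, hmem, fun x hx => by rw [hd, hdU x hx], ?_, ?_⟩
  · refine (k.com _ hmem t (et ▸ ht)).resolve_right fun h => ?_
    have e := LinearEquiv.congr_fun h w
    rw [LinearEquiv.mul_apply, LinearEquiv.mul_apply z, LinearEquiv.mul_apply t, htw, map_neg, hd,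
      hdU w htw, huw, map_neg, k.zU _ (et ▸ huw), neg_neg] at e
    exact hne (two_cancel c.h2 e.symm)
  · refine (k.com _ hmem t' (et' ▸ ht')).resolve_right fun h => ?_
    have e := LinearEquiv.congr_fun h w
    rw [LinearEquiv.mul_apply, LinearEquiv.mul_apply z, LinearEquiv.mul_apply t', hd, hd,
      hdU w htw, ht'2, qu.fx _ (hUC _ huw), zt', k.zU _ (et ▸ huw), map_neg] at e
    have := two_cancel c.h2 e
    rw [LinearEquiv.map_eq_zero_iff] at this
    exact hne this

theorem Core.c6 (k : Core i j i' j' M z) (c : Ctx B a b w v i j w' v' i' j')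
    (ht : i * i ∈ M) (ht' : i' * i' ∈ M) {d : V ≃ₗ[F] V} (hd : d ∈ M) (hdd : d * d = z)
    (hdt : Commute d (i * i)) :
    ∃ u ∈ Ctx.Y i j i' j', QE (i * i) u ∧ ∀ x, (i * i) x = -x → u x = d x := by
  obtain ⟨t, et⟩ : ∃ t, t = i * i := ⟨_, rfl⟩
  have qi : QE t i := et ▸ c.h.qei c.hB c.h2
  have qj : QE t j := et ▸ c.h.qej c.hB c.h2 c.hab
  have qij : QE t (i * j) := et ▸ c.h.qeij c.hB c.h2 c.hab
  have htt : t * t = 1 := by rw [et]; exact c.h.tt c.hB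
  have htY : t ∈ Ctx.Y i j i' j' := et ▸ k.le ht
  have hiso := c.isoY (k.le hd)
  have hdU : ∀ x, t x = -x → t (d x) = - d x := fun x hx => QP.U_of_comm (et ▸ hdt) hx
  have anti : ∀ x, t x = -x → i (j x) = - j (i x) := by
    intro x hx
    have e := LinearEquiv.congr_fun (c.h.anticomm c.hB) x
    rw [← et, LinearEquiv.mul_apply, LinearEquiv.mul_apply t, LinearEquiv.mul_apply,
      qj.U (qi.U hx)] at e
    exact e
  have hpm : ∀ u ∈ Ctx.Y i j i' j', QE t u →
      (∀ x, t x = -x → d (u x) = u (d x)) ∨ (∀ x, t x = -x → d (u x) = -u (d x)) := by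
    intro u hu qu
    obtain ⟨e, he, heU, -, -⟩ := k.lift c ht ht' hu (et ▸ qu)
    rw [← et] at heU
    rcases k.com _ hd _ he with h | h
    · left
      intro x hx
      have := LinearEquiv.congr_fun h x
      rw [LinearEquiv.mul_apply, LinearEquiv.mul_apply, heU x hx, heU _ (hdU x hx)] at this
      exact this
    · right
      intro x hx
      have := LinearEquiv.congr_fun h x
      rw [LinearEquiv.mul_apply, LinearEquiv.mul_apply z, LinearEquiv.mul_apply e,
        heU x hx, heU _ (hdU x hx), k.zU _ (et ▸ qu.U (hdU x hx))] at this
      exact this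
  have fin : ∀ u ∈ Ctx.Y i j i' j', QE t u → (∀ x, t x = -x → u (d (i x)) = i (u (d x))) →
      (∀ x, t x = -x → u (d (j x)) = j (u (d x))) →
      ∃ u ∈ Ctx.Y i j i' j', QE t u ∧ ∀ x, t x = -x → u x = d x := by
    intro u hu qu h1 h2
    have hs := c.h.scal c.hB c.h2 c.hab (g := u * d) ((c.isoY hu).mul hiso)
      (by rw [← et]; exact fun x hx => qu.U (hdU x hx)) (by rw [← et]; exact h1)
      (by rw [← et]; exact h2)
    rw [← et] at hs
    have hmul : (t * u) * (t * u) = t := by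
      rw [← qu.sq] at htt ⊢
      calc u * u * u * (u * u * u) = u * ((u * u) * (u * u)) * u := by group
        _ = u * u := by rw [htt, mul_one]
    rcases hs with hs | hs
    · refine ⟨t * u, Subgroup.mul_mem _ htY hu, ⟨hmul, fun x hx => by
        rw [LinearEquiv.mul_apply, qu.fx x hx, hx]⟩, fun x hx => ?_⟩
      have := hs x hx
      rw [LinearEquiv.mul_apply] at this
      rw [LinearEquiv.mul_apply, qu.U hx, ← qu.invU hx]
      nth_rewrite 1 [← this]
      rw [inv_app]
    · refine ⟨u, hu, qu, fun x hx => ?_⟩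
      have := hs x hx
      rw [LinearEquiv.mul_apply] at this
      have e2 : u⁻¹ (u (d x)) = u⁻¹ (-x) := by rw [this]
      rw [inv_app, map_neg, qu.invU hx, neg_neg] at e2
      exact e2.symm
  rw [← et]
  rcases hpm i Ctx.mi qi with h1 | h1 <;> rcases hpm j Ctx.mj qj with h2 | h2
  · exfalso
    have hs := c.h.scal c.hB c.h2 c.hab hiso (by rw [← et]; exact hdU) (by rw [← et]; exact h1)
      (by rw [← et]; exact h2)
    have e := LinearEquiv.congr_fun hdd w
    rw [LinearEquiv.mul_apply, k.zU w c.h.Uw] at e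
    apply c.h.w_ne
    rcases hs with hs | hs
    · rw [hs w c.h.Uw, hs w c.h.Uw] at e
      exact two_cancel c.h2 e
    · rw [hs w c.h.Uw, map_neg, hs w c.h.Uw, neg_neg] at e
      exact two_cancel c.h2 e
  · apply fin i Ctx.mi qi
    · intro x hx; rw [h1 x hx]
    · intro x hx; rw [h2 x hx, map_neg, anti _ (hdU x hx), neg_neg]
  · apply fin j Ctx.mj qj
    · intro x hx; rw [h1 x hx, map_neg, anti _ (hdU x hx)]
    · intro x hx; rw [h2 x hx]
  · apply fin (i * j) (Subgroup.mul_mem _ Ctx.mi Ctx.mj) qij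
    · intro x hx
      rw [LinearEquiv.mul_apply, LinearEquiv.mul_apply, h1 x hx, map_neg, map_neg, ← map_neg i,
        anti _ (hdU x hx)]
    · intro x hx
      rw [LinearEquiv.mul_apply, LinearEquiv.mul_apply, h2 x hx, map_neg, map_neg,
        anti _ (qj.U (hdU x hx)), neg_neg]

theorem Core.false (k : Core i j i' j' M z) (c : Ctx B a b w v i j w' v' i' j')
    (hgood : ∀ y ∈ Ctx.Y i j i' j', Good y) : False := by
  have ht := k.c5 c hgood
  have ht' : i' * i' ∈ M := k.symm.c5 c.symm (by rw [Ctx.Y_symm]; exact hgood)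
  obtain ⟨d, hd, hdU', hdt', hdt⟩ := k.symm.lift c.symm ht' ht Ctx.mi (c.h'.qei c.hB c.h2)
  have hdd : d * d = z := by
    refine (k.sq d hd).resolve_left fun h => ?_
    have e := LinearEquiv.congr_fun h w'
    have hw := c.h'.Uw
    rw [LinearEquiv.mul_apply, hdU' _ hw, hdU' _ ((c.h'.qei c.hB c.h2).U hw), ← LinearEquiv.mul_apply,
      hw] at e
    exact c.h'.w_ne (two_cancel c.h2 e.symm)
  obtain ⟨u, huY, qu, hu⟩ := k.c6 c ht ht' hd hdd hdt
  have qv := c.h'.qei c.hB c.h2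
  have tt : ∀ x, (i * i) ((i * i) x) = x := fun x => by
    rw [← LinearEquiv.mul_apply, c.h.tt c.hB]; rfl
  have tt' : ∀ x, (i' * i') ((i' * i') x) = x := fun x => by
    rw [← LinearEquiv.mul_apply, c.h'.tt c.hB]; rfl
  have hb : u * i' * u = i' * u * i' := by
    apply braid_full tt tt' qu qv c.h2
    · intro y hy
      exact braid_half c.h2 tt' hu qu.fx (fun x hx => (hdU' x hx).symm) qv.fx hdt
        (fun x hx => k.tcomm c ht ht' hx)
        (fun x hx => by rw [← LinearEquiv.mul_apply, hdd, k.zU x hx]) hy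
    · intro y hy
      exact braid_half c.h2 tt (fun x hx => (hdU' x hx).symm) qv.fx hu qu.fx hdt'
        (fun x hx => k.symm.tcomm c.symm ht' ht hx)
        (fun x hx => by rw [← LinearEquiv.mul_apply, hdd, k.zU' x hx]) hy
  obtain ⟨n, -, hn3, hn⟩ := hgood _ (Subgroup.mul_mem _ huY Ctx.mi')
  have := braid_comm hb hn3 hn
  apply c.nc
  rw [← qu.sq, this]

/-- In a solvable group of order prime to three and to the characteristic, the involutions of
quaternion pairs commute. -/
theorem partC (hB : ∀ x, B x x = 0) (h2 : (2 : F) ≠ 0) (hab : a ^ 2 + b ^ 2 = -1)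
    (H : Subgroup (V ≃ₗ[F] V)) (hgood : ∀ y ∈ H, Good y) (hsol : Group.IsSolvable H)
    (h : QP B a b w v i j) (h' : QP B a b w' v' i' j') (hi : i ∈ H) (hj : j ∈ H)
    (hi' : i' ∈ H) (hj' : j' ∈ H) : Commute (i * i) (i' * i') := by
  by_contra hnc
  have c : Ctx B a b w v i j w' v' i' j' := ⟨hB, h2, hab, h, h', hnc⟩
  have hle : Ctx.Y i j i' j' ≤ H := by
    rw [Ctx.Y, Subgroup.closure_le]
    intro x hx
    simp only [Set.mem_insert_iff, Set.mem_singleton_iff] at hx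
    rcases hx with rfl | rfl | rfl | rfl <;> assumption
  have hsolY : Group.IsSolvable (Ctx.Y i j i' j') :=
    Group.isSolvable_of_isSolvable_injective (Subgroup.inclusion_injective hle)
  obtain ⟨n, hn⟩ := hsolY.solvable
  obtain ⟨M, z, k⟩ := exists_core c (fun y hy => hgood y (hle hy))
    ⟨n, by rw [D_eq, hn, Subgroup.map_bot]⟩
  exact k.false c (fun y hy => hgood y (hle hy))

end HallSp
namespace HallSp

variable {F V : Type*} [Field F] [AddCommGroup V] [Module F V]
variable {B : LinearMap.BilinForm F V}

/-- mutually orthogonal hyperbolic planes. -/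
structure PFrame (B : LinearMap.BilinForm F V) {k : ℕ} (w v : Fin k → V) : Prop where
  ne : ∀ l, B (w l) (v l) ≠ 0
  ww : ∀ l n, l ≠ n → B (w l) (w n) = 0
  wv : ∀ l n, l ≠ n → B (w l) (v n) = 0
  vw : ∀ l n, l ≠ n → B (v l) (w n) = 0
  vv : ∀ l n, l ≠ n → B (v l) (v n) = 0

/-- a complete family of mutually orthogonal hyperbolic planes. -/
structure Frame (B : LinearMap.BilinForm F V) {k : ℕ} (w v : Fin k → V) : Prop
    extends PFrame B w v where
  cpl : ∀ u, (∀ l, B (w l) u = 0 ∧ B (v l) u = 0) → u = 0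

theorem PFrame.proj (hB : ∀ x, B x x = 0) {k : ℕ} {w v : Fin k → V} (h : PFrame B w v) (y : V) :
    ∃ α β : Fin k → F, ∀ l, B (w l) (y - ∑ n, (α n • w n + β n • v n)) = 0 ∧
      B (v l) (y - ∑ n, (α n • w n + β n • v n)) = 0 := by
  refine ⟨fun n => B y (v n) / B (w n) (v n), fun n => B (w n) y / B (w n) (v n), fun l => ?_⟩
  have hne := h.ne l
  constructor
  · rw [map_sub, map_sum, Finset.sum_eq_single l]
    · simp only [map_add, map_smul, smul_eq_mul, hB]
      field_simp; ring
    · intro n _ hn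
      simp only [map_add, map_smul, smul_eq_mul, h.ww l n hn.symm, h.wv l n hn.symm]; ring
    · simp
  · rw [map_sub, map_sum, Finset.sum_eq_single l]
    · simp only [map_add, map_smul, smul_eq_mul, hB]
      rw [anti hB (v l) (w l), anti hB (v l) y]
      field_simp; ring
    · intro n _ hn
      simp only [map_add, map_smul, smul_eq_mul, h.vw l n hn.symm, h.vv l n hn.symm]; ring
    · simp

theorem Frame.expand (hB : ∀ x, B x x = 0) {k : ℕ} {w v : Fin k → V} (h : Frame B w v) (y : V) :
    ∃ α β : Fin k → F, y = ∑ n, (α n • w n + β n • v n) := by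
  obtain ⟨α, β, hh⟩ := h.toPFrame.proj hB y
  exact ⟨α, β, sub_eq_zero.mp (h.cpl _ hh)⟩

theorem Frame.ext (hB : ∀ x, B x x = 0) {k : ℕ} {w v : Fin k → V} (h : Frame B w v)
    {g g' : V ≃ₗ[F] V} (hw : ∀ l, g (w l) = g' (w l)) (hv : ∀ l, g (v l) = g' (v l)) (y : V) :
    g y = g' y := by
  obtain ⟨α, β, rfl⟩ := h.expand hB y
  simp only [map_sum, map_add, map_smul, hw, hv]

theorem PFrame.card_le [FiniteDimensional F V] {k : ℕ} {w v : Fin k → V} (h : PFrame B w v) :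
    k ≤ Module.finrank F V := by
  have : LinearIndependent F w := by
    rw [Fintype.linearIndependent_iff]
    intro g hg l
    have e := congrArg (fun y => B y (v l)) hg
    simp only [map_sum, LinearMap.sum_apply, map_smul, LinearMap.smul_apply, smul_eq_mul,
      map_zero, LinearMap.zero_apply] at e
    rw [Finset.sum_eq_single l] at e
    · exact (mul_eq_zero.mp e).resolve_right (h.ne l)
    · intro n _ hn; rw [h.wv n l hn, mul_zero]
    · simp
  simpa using this.fintype_card_le_finrank

theorem Frame.le_card {k : ℕ} {w v : Fin k → V} (h : Frame B w v) :
    Module.finrank F V ≤ k + k := by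
  let f : V →ₗ[F] (Fin k → F) × (Fin k → F) :=
    (LinearMap.pi fun l => B (w l)).prod (LinearMap.pi fun l => B (v l))
  have hf : Function.Injective f := by
    rw [← LinearMap.ker_eq_bot, LinearMap.ker_eq_bot']
    intro u hu
    refine h.cpl u fun l => ⟨congrFun (congrArg Prod.fst hu) l, congrFun (congrArg Prod.snd hu) l⟩
  simpa using LinearMap.finrank_le_finrank_of_injective hf

theorem exists_frame [FiniteDimensional F V] (hB : ∀ x, B x x = 0)
    (hnd : ∀ u, (∀ v, B u v = 0) → u = 0) :
    ∃ (k : ℕ) (w v : Fin k → V), Frame B w v := by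
  classical
  obtain ⟨k, ⟨w, v, h⟩, hmax⟩ : ∃ k, (∃ w v : Fin k → V, PFrame B w v) ∧
      ∀ k', (∃ w v : Fin k' → V, PFrame B w v) → k' ≤ k := by
    let P : ℕ → Prop := fun k => ∃ w v : Fin k → V, PFrame B w v
    have h0 : P 0 := ⟨fun _ => 0, fun _ => 0, ⟨fun l => l.elim0, fun l => l.elim0, fun l => l.elim0,
      fun l => l.elim0, fun l => l.elim0⟩⟩
    refine ⟨Nat.findGreatest P (Module.finrank F V), Nat.findGreatest_spec (Nat.zero_le _) h0, ?_⟩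
    rintro k' ⟨w, v, h⟩
    exact Nat.le_findGreatest h.card_le ⟨w, v, h⟩
  refine ⟨k, w, v, h, fun u hu => ?_⟩
  by_contra hne
  obtain ⟨y, hy⟩ : ∃ y, B u y ≠ 0 := by
    by_contra hh; push Not at hh; exact hne (hnd u hh)
  obtain ⟨α, β, hh⟩ := h.proj hB y
  obtain ⟨y', hy'⟩ : ∃ y', y' = y - ∑ n, (α n • w n + β n • v n) := ⟨_, rfl⟩
  rw [← hy'] at hh
  have huy : B u y' ≠ 0 := by
    rw [hy', map_sub, map_sum, Finset.sum_eq_zero, sub_zero]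
    · exact hy
    · intro n _
      rw [map_add, map_smul, map_smul, anti hB u, anti hB u (v n), (hu n).1, (hu n).2]; simp
  have := hmax (k + 1) ⟨Fin.cons u w, Fin.cons y' v, ?_⟩
  · omega
  · constructor
    · intro l
      refine Fin.cases ?_ (fun l => ?_) l
      · simpa using huy
      · simpa using h.ne l
    all_goals
      intro l n
      refine Fin.cases ?_ (fun l => ?_) l <;> refine Fin.cases ?_ (fun n => ?_) n
      · intro e; exact absurd rfl e
    · intro _
      simp only [Fin.cons_zero, Fin.cons_succ]; rw [anti hB, (hu n).1, neg_zero]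
    · intro _
      simp only [Fin.cons_zero, Fin.cons_succ]; exact (hu l).1
    · intro e
      simpa using h.ww l n (fun h => e (by rw [h]))
    · intro _
      simp only [Fin.cons_zero, Fin.cons_succ]; rw [anti hB, (hu n).2, neg_zero]
    · intro _
      simp only [Fin.cons_zero, Fin.cons_succ]; exact (hh l).1
    · intro e
      simpa using h.wv l n (fun h => e (by rw [h]))
    · intro _
      simp only [Fin.cons_zero, Fin.cons_succ]; rw [anti hB, (hh n).1, neg_zero]
    · intro _
      simp only [Fin.cons_zero, Fin.cons_succ]; exact (hu l).2
    · intro e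
      simpa using h.vw l n (fun h => e (by rw [h]))
    · intro _
      simp only [Fin.cons_zero, Fin.cons_succ]; rw [anti hB, (hh n).2, neg_zero]
    · intro _
      simp only [Fin.cons_zero, Fin.cons_succ]; exact (hh l).2
    · intro e
      simpa using h.vv l n (fun h => e (by rw [h]))

/-- the linear map acting on a plane by a matrix and trivially on the complement. -/
noncomputable def plane (B : LinearMap.BilinForm F V) (w v : V) (p q r s : F) : V →ₗ[F] V :=
  LinearMap.id + (-(B v)).smulRight ((B w v)⁻¹ • ((p - 1) • w + q • v)) +
    (B w).smulRight ((B w v)⁻¹ • (r • w + (s - 1) • v))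

theorem plane_w (hB : ∀ x, B x x = 0) {w v : V} (hne : B w v ≠ 0) (p q r s : F) :
    plane B w v p q r s w = p • w + q • v := by
  simp only [plane, LinearMap.add_apply, LinearMap.id_apply, LinearMap.smulRight_apply,
    LinearMap.neg_apply, anti hB v w, neg_neg, hB, smul_smul, mul_inv_cancel₀ hne]
  module

theorem plane_v (hB : ∀ x, B x x = 0) {w v : V} (hne : B w v ≠ 0) (p q r s : F) :
    plane B w v p q r s v = r • w + s • v := by
  simp only [plane, LinearMap.add_apply, LinearMap.id_apply, LinearMap.smulRight_apply,
    LinearMap.neg_apply, anti hB v w, neg_neg, hB, smul_smul, mul_inv_cancel₀ hne]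
  module

theorem plane_c (hB : ∀ x, B x x = 0) {w v : V} (p q r s : F) {c : V}
    (h1 : B w c = 0) (h2 : B v c = 0) : plane B w v p q r s c = c := by
  simp only [plane, LinearMap.add_apply, LinearMap.id_apply, LinearMap.smulRight_apply,
    LinearMap.neg_apply, h1, h2]
  module

theorem plane_inv (hB : ∀ x, B x x = 0) {w v : V} (hne : B w v ≠ 0) {p q r s : F}
    (hd : p * s - q * r = 1) (x : V) :
    plane B w v p q r s (plane B w v s (-q) (-r) p x) = x := by
  obtain ⟨α, β, c, rfl, hc1, hc2⟩ := decomp hB hne x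
  simp only [map_add, map_smul, plane_w hB hne, plane_v hB hne, plane_c hB _ _ _ _ hc1 hc2]
  match_scalars
  · linear_combination α * hd
  · linear_combination β * hd
  · ring

theorem exists_plane (hB : ∀ x, B x x = 0) {w v : V} (hne : B w v ≠ 0) {p q r s : F}
    (hd : p * s - q * r = 1) : ∃ g : V ≃ₗ[F] V, g w = p • w + q • v ∧ g v = r • w + s • v ∧
      (∀ x, B w x = 0 → B v x = 0 → g x = x) ∧ Iso B g := by
  let g : V ≃ₗ[F] V := LinearEquiv.ofLinearMap (plane B w v p q r s) (plane B w v s (-q) (-r) p)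
    (by ext x; exact plane_inv hB hne hd x)
    (by
      ext x
      have := plane_inv hB hne (p := s) (q := -q) (r := -r) (s := p) (by linear_combination hd) x
      rw [neg_neg, neg_neg] at this
      exact this)
  have gw : g w = p • w + q • v := plane_w hB hne p q r s
  have gv : g v = r • w + s • v := plane_v hB hne p q r s
  have gc : ∀ x, B w x = 0 → B v x = 0 → g x = x := fun x h1 h2 => plane_c hB p q r s h1 h2
  refine ⟨g, gw, gv, gc, fun x y => ?_⟩
  obtain ⟨α, β, c, rfl, hc1, hc2⟩ := decomp hB hne x
  obtain ⟨α', β', c', rfl, hc1', hc2'⟩ := decomp hB hne y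
  simp only [map_add, map_smul, gw, gv, gc c hc1 hc2, gc c' hc1' hc2', LinearMap.add_apply,
    LinearMap.smul_apply, smul_eq_mul, hB, anti hB v w, anti hB c w, anti hB c v, hc1, hc2,
    hc1', hc2']
  linear_combination (α * β' - β * α') * B w v * hd

theorem exists_QP (hB : ∀ x, B x x = 0) {w v : V} (hne : B w v ≠ 0) {a b : F}
    (hab : a ^ 2 + b ^ 2 = -1) : ∃ i j : V ≃ₗ[F] V, QP B a b w v i j := by
  obtain ⟨i, i1, i2, i3, i4⟩ := exists_plane hB hne (p := 0) (q := 1) (r := -1) (s := 0) (by ring)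
  obtain ⟨j, j1, j2, j3, j4⟩ := exists_plane hB hne (p := a) (q := b) (r := b) (s := -a)
    (by linear_combination -hab)
  exact ⟨i, j, hne, by rw [i1]; module, by rw [i2]; module, i3, j1, by rw [j2]; module, j3, i4, j4⟩

end HallSp
namespace HallSp

variable {F V : Type*} [Field F] [AddCommGroup V] [Module F V]
variable {B : LinearMap.BilinForm F V} {a b : F}

/-- Similitudes of the form. -/
def Sim (B : LinearMap.BilinForm F V) (g : V ≃ₗ[F] V) : Prop :=
  ∃ c : F, c ≠ 0 ∧ ∀ x y, B (g x) (g y) = c * B x y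

theorem Iso.sim {g : V ≃ₗ[F] V} (h : Iso B g) : Sim B g := ⟨1, one_ne_zero, fun x y => by
  rw [h, one_mul]⟩

theorem Sim.inv {g : V ≃ₗ[F] V} (h : Sim B g) : Sim B g⁻¹ := by
  obtain ⟨c, hc, h⟩ := h
  refine ⟨c⁻¹, inv_ne_zero hc, fun x y => ?_⟩
  have := h (g⁻¹ x) (g⁻¹ y)
  rw [app_inv, app_inv] at this
  rw [this, inv_mul_cancel_left₀ hc]

theorem Iso.conj {g u : V ≃ₗ[F] V} (hg : Sim B g) (hu : Iso B u) : Iso B (g * u * g⁻¹) := by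
  intro x y
  obtain ⟨c, hc, h⟩ := hg
  simp only [LinearEquiv.mul_apply]
  rw [h, hu, ← h, app_inv, app_inv]

theorem Sim.zero {g : V ≃ₗ[F] V} (hg : Sim B g) {x y : V} (h : B (g x) y = 0) :
    B x (g⁻¹ y) = 0 := by
  obtain ⟨c, hc, e⟩ := hg
  have := e x (g⁻¹ y)
  rw [app_inv, h] at this
  exact (mul_eq_zero.mp this.symm).resolve_left hc

theorem QP.conj {w v : V} {i j g : V ≃ₗ[F] V} (hg : Sim B g) (h : QP B a b w v i j) :
    QP B a b (g w) (g v) (g * i * g⁻¹) (g * j * g⁻¹) where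
  ne := by
    obtain ⟨c, hc, e⟩ := hg
    rw [e]; exact mul_ne_zero hc h.ne
  iw := by simp only [LinearEquiv.mul_apply, inv_app, h.iw]
  iv := by simp only [LinearEquiv.mul_apply, inv_app, h.iv, map_neg]
  ic := fun x h1 h2 => by
    simp only [LinearEquiv.mul_apply]
    rw [h.ic _ (hg.zero h1) (hg.zero h2), app_inv]
  jw := by simp only [LinearEquiv.mul_apply, inv_app, h.jw, map_add, map_smul]
  jv := by simp only [LinearEquiv.mul_apply, inv_app, h.jv, map_sub, map_smul]
  jc := fun x h1 h2 => by
    simp only [LinearEquiv.mul_apply]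
    rw [h.jc _ (hg.zero h1) (hg.zero h2), app_inv]
  ii := h.ii.conj hg
  ij := h.ij.conj hg

theorem QP.uniq (hB : ∀ x, B x x = 0) {w v : V} {i j i' j' : V ≃ₗ[F] V} (h : QP B a b w v i j)
    (h' : QP B a b w v i' j') : i = i' ∧ j = j' := by
  constructor <;> ext x <;> obtain ⟨α, β, c, rfl, hc1, hc2⟩ := decomp hB h.ne x
  · simp only [map_add, map_smul, h.iw, h.iv, h'.iw, h'.iv, h.ic c hc1 hc2, h'.ic c hc1 hc2]
  · simp only [map_add, map_smul, h.jw, h.jv, h'.jw, h'.jv, h.jc c hc1 hc2, h'.jc c hc1 hc2]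

theorem Frame.conj {k : ℕ} {w v : Fin k → V} {g : V ≃ₗ[F] V} (hg : Sim B g) (h : Frame B w v) :
    Frame B (fun l => g (w l)) (fun l => g (v l)) where
  ne l := by
    obtain ⟨c, hc, e⟩ := hg
    rw [e]; exact mul_ne_zero hc (h.ne l)
  ww l n hn := by obtain ⟨c, hc, e⟩ := hg; rw [e, h.ww l n hn, mul_zero]
  wv l n hn := by obtain ⟨c, hc, e⟩ := hg; rw [e, h.wv l n hn, mul_zero]
  vw l n hn := by obtain ⟨c, hc, e⟩ := hg; rw [e, h.vw l n hn, mul_zero]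
  vv l n hn := by obtain ⟨c, hc, e⟩ := hg; rw [e, h.vv l n hn, mul_zero]
  cpl u hu := by
    have := h.cpl (g⁻¹ u) fun l => ⟨hg.zero (hu l).1, hg.zero (hu l).2⟩
    rw [← app_inv g u, this, map_zero]

/-- conjugation by `g` fixes or inverts `u`. -/
def CPM {G : Type*} [Group G] (g u : G) : Prop := g * u * g⁻¹ = u ∨ g * u * g⁻¹ = u⁻¹

theorem CPM.mul {G : Type*} [Group G] {g h u : G} (hg : CPM g u) (hh : CPM h u) :
    CPM (g * h) u := by
  have e : g * h * u * (g * h)⁻¹ = g * (h * u * h⁻¹) * g⁻¹ := by group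
  have e2 : g * u⁻¹ * g⁻¹ = (g * u * g⁻¹)⁻¹ := by group
  rw [CPM, e]
  rcases hh with hh | hh <;> rw [hh]
  · exact hg
  · rw [e2]
    rcases hg with hg | hg <;> rw [hg]
    · right; rfl
    · left; rw [inv_inv]

theorem CPM.inv {G : Type*} [Group G] {g u : G} (hg : CPM g u) : CPM g⁻¹ u := by
  rcases hg with hg | hg
  · left
    nth_rewrite 1 [← hg]; group
  · right
    have : u = (g * u * g⁻¹)⁻¹ := by rw [hg, inv_inv]
    nth_rewrite 1 [this]; group

theorem CPM.one {G : Type*} [Group G] {u : G} : CPM 1 u := by left; group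

theorem CPM.comm {G : Type*} [Group G] {g u : G} (hg : CPM g u) : Commute (g * g) u := by
  have e : g * g * u * (g * g)⁻¹ = u := by
    have e : g * g * u * (g * g)⁻¹ = g * (g * u * g⁻¹) * g⁻¹ := by group
    have e2 : g * u⁻¹ * g⁻¹ = (g * u * g⁻¹)⁻¹ := by group
    rw [e]
    rcases hg with h | h
    · rw [h, h]
    · rw [h, e2, h, inv_inv]
  exact mul_inv_eq_iff_eq_mul.mp e

/-- the normalizing 2-group. -/
def Agrp (B : LinearMap.BilinForm F V) {k : ℕ} (i j : Fin k → V ≃ₗ[F] V) :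
    Subgroup (V ≃ₗ[F] V) where
  carrier := {g | Iso B g ∧ ∀ l, CPM g (i l) ∧ CPM g (j l)}
  one_mem' := ⟨Iso.one, fun _ => ⟨CPM.one, CPM.one⟩⟩
  mul_mem' := fun hg hh => ⟨hg.1.mul hh.1, fun l => ⟨(hg.2 l).1.mul (hh.2 l).1,
    (hg.2 l).2.mul (hh.2 l).2⟩⟩
  inv_mem' := fun hg => ⟨hg.1.inv, fun l => ⟨(hg.2 l).1.inv, (hg.2 l).2.inv⟩⟩

theorem Agrp_pow (hB : ∀ x, B x x = 0) (h2 : (2 : F) ≠ 0) (hab : a ^ 2 + b ^ 2 = -1)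
    {k : ℕ} {w v : Fin k → V} (hf : Frame B w v) {i j : Fin k → V ≃ₗ[F] V}
    (h : ∀ l, QP B a b (w l) (v l) (i l) (j l)) {g : V ≃ₗ[F] V} (hg : g ∈ Agrp B i j) :
    g ^ 4 = 1 := by
  have key : ∀ l x, (i l * i l) x = -x → (g ^ 4) x = x := by
    intro l x hx
    have ci := (hg.2 l).1.comm
    have cj := (hg.2 l).2.comm
    have e4 : g ^ 4 = (g * g) * (g * g) := by
      simp only [pow_succ, pow_zero, one_mul, mul_assoc]
    have hs := (h l).scal hB h2 hab (hg.1.mul hg.1)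
      (fun x hx => QP.U_of_comm (ci.mul_right ci) hx)
      (fun x _ => LinearEquiv.congr_fun ci.eq x) (fun x _ => LinearEquiv.congr_fun cj.eq x)
    rw [e4, LinearEquiv.mul_apply (g * g) (g * g)]
    rcases hs with hs | hs
    · rw [hs x hx, hs x hx]
    · rw [hs x hx, map_neg, hs x hx, neg_neg]
  ext x
  exact hf.ext hB (fun l => key l _ (h l).Uw) (fun l => key l _ (h l).Uv) x

theorem QP.cpm (hB : ∀ x, B x x = 0) (hab : a ^ 2 + b ^ 2 = -1) {w v : V} {i j : V ≃ₗ[F] V}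
    (h : QP B a b w v i j) : CPM i j ∧ CPM j i := by
  have ei : (i * i) * i = i⁻¹ := by
    apply eq_inv_of_mul_eq_one_left
    rw [mul_assoc, h.tt hB]
  have ej : (i * i) * j = j⁻¹ := by
    apply eq_inv_of_mul_eq_one_left
    rw [mul_assoc, h.jj hB hab, h.tt hB]
  have e := h.anticomm hB
  constructor
  · right
    rw [e, ← ej]; group
  · right
    have e3 : j * i = (i * i) * (i * j) := by
      rw [e, ← mul_assoc (i * i) (i * i), h.tt hB, one_mul]
    rw [e3, ← ei]; group

theorem Agrp_mem (hB : ∀ x, B x x = 0) (hab : a ^ 2 + b ^ 2 = -1)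
    {k : ℕ} {w v : Fin k → V} (hf : Frame B w v) {i j : Fin k → V ≃ₗ[F] V}
    (h : ∀ l, QP B a b (w l) (v l) (i l) (j l)) (n : Fin k) :
    i n ∈ Agrp B i j ∧ j n ∈ Agrp B i j := by
  have key : ∀ u : V ≃ₗ[F] V, Iso B u → (∀ x, B (w n) x = 0 → B (v n) x = 0 → u x = x) →
      ∀ l, n ≠ l → CPM u (i l) ∧ CPM u (j l) := by
    intro u hu hx l hl
    have h1 := (h l).conj hu.sim
    rw [hx _ (hf.ww n l hl) (hf.vw n l hl), hx _ (hf.wv n l hl) (hf.vv n l hl)] at h1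
    obtain ⟨e1, e2⟩ := h1.uniq hB (h l)
    exact ⟨Or.inl e1, Or.inl e2⟩
  refine ⟨⟨(h n).ii, fun l => ?_⟩, ⟨(h n).ij, fun l => ?_⟩⟩
  · by_cases hl : n = l
    · subst hl
      exact ⟨Or.inl (by group), ((h n).cpm hB hab).1⟩
    · exact key _ (h n).ii (h n).ic l hl
  · by_cases hl : n = l
    · subst hl
      exact ⟨((h n).cpm hB hab).2, Or.inl (by group)⟩
    · exact key _ (h n).ij (h n).jc l hl

/-- a 2-subgroup is conjugate into a subgroup of odd index. -/
theorem conj_into {G : Type*} [Group G] [Finite G] (K H A : Subgroup G)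
    (hA : A ≤ K) (hodd : ¬ 2 ∣ H.relIndex K) (hp : ∀ x ∈ A, x ^ 4 = 1) :
    ∃ g ∈ K, ∀ x ∈ A, g⁻¹ * x * g ∈ H := by
  haveI : Fact (Nat.Prime 2) := ⟨Nat.prime_two⟩
  have hP : IsPGroup 2 (A.subgroupOf K) := by
    intro x
    refine ⟨2, ?_⟩
    ext
    exact hp _ x.2
  have hcard : ¬ 2 ∣ Nat.card (K ⧸ H.subgroupOf K) := hodd
  obtain ⟨y, hy⟩ := hP.nonempty_fixed_point_of_prime_not_dvd_card (K ⧸ H.subgroupOf K) hcard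
  obtain ⟨g, rfl⟩ := QuotientGroup.mk_surjective y
  refine ⟨g, g.2, fun x hx => ?_⟩
  have := hy ⟨⟨x, hA hx⟩, hx⟩
  have e : ((⟨x, hA hx⟩ * g : K) : K ⧸ H.subgroupOf K) = (g : K ⧸ H.subgroupOf K) := this
  have e2 := (QuotientGroup.eq.mp e.symm)
  have e3 : (g : G)⁻¹ * (x * g) ∈ H := e2
  rwa [← mul_assoc] at e3

/-- Parts A and B. -/
theorem partAB [Finite (V ≃ₗ[F] V)] [FiniteDimensional F V] (hB : ∀ x, B x x = 0)
    (hnd : ∀ u, (∀ v, B u v = 0) → u = 0) (h2 : (2 : F) ≠ 0) (hab : a ^ 2 + b ^ 2 = -1)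
    (K H : Subgroup (V ≃ₗ[F] V)) (hK : ∀ g, g ∈ K ↔ Sim B g) (hodd : ¬ 2 ∣ H.relIndex K) :
    ∃ (k : ℕ) (w v : Fin k → V) (i j : Fin k → V ≃ₗ[F] V), Frame B w v ∧
      (∀ l, QP B a b (w l) (v l) (i l) (j l)) ∧ ∀ l, i l ∈ H ∧ j l ∈ H := by
  obtain ⟨k, w, v, hf⟩ := exists_frame hB hnd
  choose i j h using fun l => exists_QP hB (hf.ne l) hab
  obtain ⟨g, hg, hgA⟩ := conj_into K H (Agrp B i j) (fun x hx => (hK x).mpr hx.1.sim) hodd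
    (fun x hx => Agrp_pow hB h2 hab hf h hx)
  have hs := ((hK g).mp hg).inv
  refine ⟨k, _, _, _, _, hf.conj hs, fun l => (h l).conj hs, fun l => ?_⟩
  rw [inv_inv]
  exact ⟨hgA _ (Agrp_mem hB hab hf h l).1, hgA _ (Agrp_mem hB hab hf h l).2⟩

/-- the planes of a frame. -/
def FU {k : ℕ} (w v : Fin k → V) (l : Fin k) (u : V) : Prop :=
  ∃ α β : F, u = α • w l + β • v l

/-- Part D. -/
theorem partD (hB : ∀ x, B x x = 0) (h2 : (2 : F) ≠ 0) (hab : a ^ 2 + b ^ 2 = -1)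
    (H : Subgroup (V ≃ₗ[F] V)) (hgood : ∀ y ∈ H, Good y) (hsol : Group.IsSolvable H)
    (hsim : ∀ y ∈ H, Sim B y)
    {k : ℕ} {w v : Fin k → V} (hf : Frame B w v) {i j : Fin k → V ≃ₗ[F] V}
    (h : ∀ l, QP B a b (w l) (v l) (i l) (j l)) (hH : ∀ l, i l ∈ H ∧ j l ∈ H)
    {g : V ≃ₗ[F] V} (hg : g ∈ H) (n : Fin k) :
    ∃ l, ∀ u, FU (F := F) w v n u → FU (F := F) w v l (g u) := by
  have hq := (h n).conj (hsim g hg)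
  have hc : ∀ l, Commute (i l * i l) ((g * i n * g⁻¹) * (g * i n * g⁻¹)) := fun l =>
    partC hB h2 hab H hgood hsol (h l) hq (hH l).1 (hH l).2
      (H.mul_mem (H.mul_mem hg (hH n).1) (H.inv_mem hg))
      (H.mul_mem (H.mul_mem hg (hH n).2) (H.inv_mem hg))
  have hs : ∀ l, _ := fun l => hq.sign hB h2 ((h l).ii.mul (h l).ii)
    (fun x hx => QP.U_of_comm (hc l) hx)
    (fun x _ => LinearEquiv.congr_fun ((h l).tt hB) x)
  obtain ⟨l, hl⟩ : ∃ l, ∀ x, ((g * i n * g⁻¹) * (g * i n * g⁻¹)) x = -x → (i l * i l) x = -x := by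
    by_contra hcon
    push Not at hcon
    apply hq.w_ne
    apply hf.cpl
    intro l
    rw [← (h l).memC hB h2]
    refine ((hs l).resolve_right fun hh => ?_) _ hq.Uw
    obtain ⟨x, hx, hx'⟩ := hcon l
    exact hx' (hh x hx)
  refine ⟨l, ?_⟩
  rintro u ⟨α, β, rfl⟩
  apply ((h l).memU hB h2).mp
  apply hl
  rw [map_add, map_smul, map_smul]
  exact hq.tU α β

end HallSp
namespace HallSp

variable {F V : Type*} [Field F] [AddCommGroup V] [Module F V]
variable {B : LinearMap.BilinForm F V} {k : ℕ} {w v : Fin k → V}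

theorem FU.sub {l : Fin k} {x y : V} (hx : FU (F := F) w v l x) (hy : FU (F := F) w v l y) :
    FU (F := F) w v l (x - y) := by
  obtain ⟨α, β, rfl⟩ := hx
  obtain ⟨α', β', rfl⟩ := hy
  exact ⟨α - α', β - β', by module⟩

theorem FU.orth (hf : Frame B w v) {l n : Fin k} (hn : l ≠ n) {x y : V}
    (hx : FU (F := F) w v l x) (hy : FU (F := F) w v n y) : B x y = 0 := by
  obtain ⟨α, β, rfl⟩ := hx
  obtain ⟨α', β', rfl⟩ := hy
  simp only [map_add, map_smul, LinearMap.add_apply, LinearMap.smul_apply, hf.ww l n hn,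
    hf.wv l n hn, hf.vw l n hn, hf.vv l n hn, smul_zero, add_zero]

theorem fuw (l : Fin k) : FU (F := F) w v l (w l) := ⟨1, 0, by module⟩
theorem fuv (l : Fin k) : FU (F := F) w v l (v l) := ⟨0, 1, by module⟩

theorem FU.nondeg (hB : ∀ x, B x x = 0) (hf : Frame B w v) {l : Fin k} {x : V}
    (hx : FU (F := F) w v l x) (h : ∀ s, FU (F := F) w v l s → B s x = 0) : x = 0 := by
  apply hf.cpl
  intro n
  by_cases hn : n = l
  · subst hn; exact ⟨h _ (fuw n), h _ (fuv n)⟩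
  · exact ⟨FU.orth hf hn (fuw n) hx, FU.orth hf hn (fuv n) hx⟩

theorem FU.dual (hB : ∀ x, B x x = 0) (hf : Frame B w v) {l : Fin k} {x : V}
    (hx : FU (F := F) w v l x) (h0 : x ≠ 0) : ∃ s, FU (F := F) w v l s ∧ B s x = 1 := by
  by_contra hcon
  apply h0
  apply hx.nondeg hB hf
  intro s hs
  by_contra hne
  obtain ⟨α, β, rfl⟩ := hs
  refine hcon ⟨(B (α • w l + β • v l) x)⁻¹ • (α • w l + β • v l), ⟨_, _, by rw [smul_add, smul_smul, smul_smul]⟩, ?_⟩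
  rw [map_smul, LinearMap.smul_apply, smul_eq_mul, inv_mul_cancel₀ hne]

theorem FU.prop (hB : ∀ x, B x x = 0) (hf : Frame B w v) {l : Fin k} {x y : V}
    (hx : FU (F := F) w v l x) (hy : FU (F := F) w v l y) (h0 : y ≠ 0) (h : B y x = 0) :
    ∃ c : F, x = c • y := by
  obtain ⟨s, hs, hsy⟩ := hy.dual hB hf h0
  refine ⟨B s x, ?_⟩
  -- the plane is spanned by s and y
  obtain ⟨α, β, rfl⟩ := hx
  obtain ⟨α', β', rfl⟩ := hy
  obtain ⟨α₂, β₂, rfl⟩ := hs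
  have hne := hf.ne l
  simp only [map_add, map_smul, LinearMap.add_apply, LinearMap.smul_apply, smul_eq_mul, hB,
    anti hB (v l) (w l)] at h hsy ⊢
  have h' : α' * β - β' * α = 0 := by
    apply (mul_eq_zero.mp (_ : _ * B (w l) (v l) = 0)).resolve_right hne
    linear_combination h
  match_scalars
  · linear_combination -α * hsy - α₂ * B (w l) (v l) * h'
  · linear_combination -β * hsy - β₂ * B (w l) (v l) * h'

theorem FU.nondeg2 (hB : ∀ x, B x x = 0) (hf : Frame B w v) {l : Fin k} {p q x : V}
    (hp : FU (F := F) w v l p) (hx : FU (F := F) w v l x)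
    (hne : B p q ≠ 0) (h1 : B p x = 0) (h2 : B q x = 0) : x = 0 := by
  have hp0 : p ≠ 0 := by rintro rfl; simp at hne
  obtain ⟨c, rfl⟩ := hx.prop hB hf hp hp0 h1
  rw [map_smul, smul_eq_mul, anti hB] at h2
  have := (mul_eq_zero.mp h2).resolve_right (neg_ne_zero.mpr hne)
  rw [this, zero_smul]

/-- nilpotent map attached to a graph and a family of lines. -/
noncomputable def Nil (B : LinearMap.BilinForm F V) (S : Fin k → Fin k → F) (l : Fin k → V) :
    V →ₗ[F] V := ∑ n, ∑ r, S n r • (B (l n)).smulRight (l r)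

theorem Nil_apply (S : Fin k → Fin k → F) (l : Fin k → V) (u : V) :
    Nil B S l u = ∑ n, ∑ r, (S n r * B (l n) u) • l r := by
  simp only [Nil, LinearMap.sum_apply, LinearMap.smul_apply, LinearMap.smulRight_apply, smul_smul]

theorem B_Nil (S : Fin k → Fin k → F) (l : Fin k → V) (s u : V) :
    B s (Nil B S l u) = ∑ n, ∑ r, S n r * B (l n) u * B s (l r) := by
  simp only [Nil_apply, map_sum, map_smul, smul_eq_mul]

theorem Nil_iso (hB : ∀ x, B x x = 0) (S : Fin k → Fin k → F) (hS : ∀ n r, S n r = S r n)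
    (l : Fin k → V) (hl : ∀ n r, B (l n) (l r) = 0) :
    ∃ x : V ≃ₗ[F] V, Iso B x ∧ ∀ u, x u = u + Nil B S l u := by
  have hBN : ∀ n u, B (l n) (Nil B S l u) = 0 := by
    intro n u; rw [B_Nil]; simp only [hl, mul_zero, Finset.sum_const_zero]
  have hNN : ∀ u, Nil B S l (Nil B S l u) = 0 := by
    intro u; rw [Nil_apply]; simp only [hBN, mul_zero, zero_smul, Finset.sum_const_zero]
  refine ⟨LinearEquiv.ofLinearMap (LinearMap.id + Nil B S l) (LinearMap.id - Nil B S l)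
    (by ext u; simp [hNN]) (by ext u; simp [hNN]), ?_, fun u => rfl⟩
  intro u u'
  change B (u + Nil B S l u) (u' + Nil B S l u') = _
  have e0 : B (Nil B S l u) (Nil B S l u') = 0 := by
    rw [anti hB, B_Nil]
    simp only [anti hB _ (l _), hBN, neg_zero, mul_zero, Finset.sum_const_zero]
  have e1 : B u (Nil B S l u') = - B (Nil B S l u) u' := by
    rw [anti hB (Nil B S l u) u', B_Nil, B_Nil, neg_neg, Finset.sum_comm]
    refine Finset.sum_congr rfl fun n _ => Finset.sum_congr rfl fun r _ => ?_
    rw [hS r n, anti hB u (l n), anti hB u' (l r)]; ring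
  simp only [map_add, LinearMap.add_apply]
  rw [e0, e1]; ring

theorem pairing (hf : Frame B w v) (S : Fin k → Fin k → F) {l : Fin k → V}
    (hl : ∀ n, FU (F := F) w v n (l n)) {n r : Fin k} {s u : V} (hs : FU (F := F) w v r s)
    (hu : FU (F := F) w v n u) : B s (Nil B S l u) = S n r * B (l n) u * B s (l r) := by
  rw [B_Nil, Finset.sum_eq_single n, Finset.sum_eq_single r]
  · intro r' _ hr; rw [FU.orth hf hr.symm hs (hl r'), mul_zero]
  · simp
  · intro n' _ hn
    refine Finset.sum_eq_zero fun r' _ => ?_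
    rw [FU.orth hf hn (hl n') hu]; ring
  · simp

theorem partE1 (hB : ∀ x, B x x = 0) (hf : Frame B w v) {S : Fin k → Fin k → F}
    (hS0 : ∀ n, S n n = 0) (hS1 : ∀ n, ∃ r, S n r ≠ 0) {l : Fin k → V}
    (hl : ∀ n, FU (F := F) w v n (l n)) (hl0 : ∀ n, l n ≠ 0)
    {x g : V ≃ₗ[F] V} (hx : ∀ u, x u = u + Nil B S l u) {c : F} (hc : c ≠ 0)
    (hg : ∀ u u', B (g u) (g u') = c * B u u') {σ : Fin k → Fin k}
    (hσ : ∀ n u, FU (F := F) w v n u → FU (F := F) w v (σ n) (g u))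
    (hρ : ∀ n, ∃ r, ∀ u, FU (F := F) w v n u → FU (F := F) w v r ((x⁻¹ * g * x) u)) :
    ∃ d : Fin k → F, (∀ n, g (l n) = d n • l (σ n)) ∧
      ∀ n r, d n * d r * S n r = c * S (σ n) (σ r) := by
  have hxx : ∀ u, (x⁻¹ * g * x) u + Nil B S l ((x⁻¹ * g * x) u) = g u + g (Nil B S l u) := by
    intro u
    rw [← hx, LinearEquiv.mul_apply, LinearEquiv.mul_apply, app_inv, hx, map_add]
  have hll : ∀ n r, B (l n) (l r) = 0 := by
    intro n r
    by_cases h : n = r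
    · rw [h, hB]
    · exact FU.orth hf h (hl n) (hl r)
  have hNl : ∀ n, Nil B S l (l n) = 0 := by
    intro n; rw [Nil_apply]; simp only [hll, mul_zero, zero_smul, Finset.sum_const_zero]
  have hgl0 : ∀ n, g (l n) ≠ 0 := fun n h => hl0 n ((LinearEquiv.map_eq_zero_iff g).mp h)
  have step1 : ∀ n, (∀ u, FU (F := F) w v n u → FU (F := F) w v (σ n) ((x⁻¹ * g * x) u)) ∧
      ∃ d : F, g (l n) = d • l (σ n) := by
    intro n
    obtain ⟨r, hr⟩ := hρ n
    have e := hxx (l n)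
    rw [hNl, map_zero, add_zero] at e
    have hr' := hr _ (hl n)
    generalize (x⁻¹ * g * x) (l n) = u' at e hr'
    have hrσ : r = σ n := by
      by_contra hne
      have : u' = 0 := by
        apply hr'.nondeg hB hf
        intro s hs
        have e2 := congrArg (B s) e
        rw [map_add, pairing hf S hl hs hr', hS0, FU.orth hf hne hs (hσ n _ (hl n))] at e2
        linear_combination e2
      rw [this, map_zero, add_zero] at e
      exact hgl0 n e.symm
    subst hrσ
    refine ⟨hr, ?_⟩
    have hu' : u' = g (l n) := by
      apply sub_eq_zero.mp
      apply (hr'.sub (hσ n _ (hl n))).nondeg hB hf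
      intro s hs
      have e2 := congrArg (B s) e
      rw [map_add, pairing hf S hl hs hr', hS0] at e2
      rw [map_sub]
      linear_combination e2
    rw [hu'] at e
    obtain ⟨r, hSr⟩ := hS1 (σ n)
    obtain ⟨s, hs, hs1⟩ := (hl r).dual hB hf (hl0 r)
    have e2 := congrArg (B s) e
    rw [map_add, pairing hf S hl hs (hσ n _ (hl n)), hs1] at e2
    have e3 : S (σ n) r * B (l (σ n)) (g (l n)) = 0 := by linear_combination e2
    exact (hσ n _ (hl n)).prop hB hf (hl _) (hl0 _) ((mul_eq_zero.mp e3).resolve_left hSr)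
  choose hρ' d hd using step1
  refine ⟨d, hd, fun n r => ?_⟩
  obtain ⟨u₀, hu₀, hu₁⟩ := (hl n).dual hB hf (hl0 n)
  obtain ⟨u, hu, hu1⟩ : ∃ u, FU (F := F) w v n u ∧ B (l n) u = 1 := by
    refine ⟨-u₀, ?_, ?_⟩
    · obtain ⟨α, β, rfl⟩ := hu₀
      exact ⟨-α, -β, by module⟩
    · rw [map_neg, anti hB, neg_neg, hu₁]
  obtain ⟨s, hs, hs1⟩ := (hl r).dual hB hf (hl0 r)
  have e := hxx u
  have hr' := hρ' n u hu
  generalize (x⁻¹ * g * x) u = u' at e hr'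
  have hu' : u' = g u := by
    have key : ∀ s, FU (F := F) w v n s → B (g s) (u' - g u) = 0 := by
      intro s hs
      have e2 := congrArg (B (g s)) e
      rw [map_add, map_add, pairing hf S hl (hσ n _ hs) hr', hS0, hg s (Nil B S l u),
        pairing hf S hl hs hu, hS0] at e2
      rw [map_sub]
      linear_combination e2
    apply sub_eq_zero.mp
    refine FU.nondeg2 hB hf (hσ n _ (fuw n)) (hr'.sub (hσ n _ hu)) (q := g (v n)) ?_
      (key _ (fuw n)) (key _ (fuv n))
    rw [hg]; exact mul_ne_zero hc (hf.ne n)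
  rw [hu'] at e
  have e2 := congrArg (B (g s)) e
  rw [map_add, map_add, pairing hf S hl (hσ r _ hs) (hσ n _ hu), hg s (Nil B S l u),
        pairing hf S hl hs hu, hu1, hs1] at e2
  have f1 := hg (l n) u
  rw [hd, map_smul, LinearMap.smul_apply, smul_eq_mul, hu1] at f1
  have f2 := hg s (l r)
  rw [hd, map_smul, smul_eq_mul, hs1] at f2
  apply mul_left_cancel₀ hc
  have e3 : S (σ n) (σ r) * B (l (σ n)) (g u) * B (g s) (l (σ r)) = c * S n r := by
    linear_combination e2
  linear_combination (-d n * d r) * e3 + S (σ n) (σ r) * d r * B (g s) (l (σ r)) * f1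
    + S (σ n) (σ r) * c * f2

/-- the path graph. -/
def path (n r : Fin k) : F := if n.val + 1 = r.val ∨ r.val + 1 = n.val then 1 else 0

theorem partE2 (hB : ∀ x, B x x = 0) (hf : Frame B w v) (hk : 2 ≤ k)
    (P : (V ≃ₗ[F] V) → Prop) (hP : ∀ g, P g → ∀ n, ∃ l, ∀ u, FU (F := F) w v n u →
      FU (F := F) w v l (g u)) :
    ∃ x y z : V ≃ₗ[F] V, Iso B x ∧ Iso B y ∧ Iso B z ∧
      ∀ g, Sim B g → P g → P (x⁻¹ * g * x) → P (y⁻¹ * g * y) → P (z⁻¹ * g * z) →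
        ∃ c : F, ∀ u, g u = c • u := by
  have hw0 : ∀ n, w n ≠ 0 := fun n h => hf.ne n (by rw [h]; simp)
  have hv0 : ∀ n, v n ≠ 0 := fun n h => hf.ne n (by rw [h]; simp)
  let o : Fin k := ⟨0, by omega⟩
  let l : Fin k → V := fun n => if n = o then w o + v o else w n
  have lo : l o = w o + v o := if_pos rfl
  have ln : ∀ n, n ≠ o → l n = w n := fun n hn => if_neg hn
  have hl : ∀ n, FU (F := F) w v n (l n) := by
    intro n
    by_cases h : n = o
    · rw [h, lo]; exact ⟨1, 1, by module⟩
    · rw [ln n h]; exact fuw n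
  have hl0 : ∀ n, l n ≠ 0 := by
    intro n
    by_cases h : n = o
    · rw [h, lo]
      intro e
      have := congrArg (B (w o)) e
      rw [map_add, hB, zero_add, map_zero] at this
      exact hf.ne o this
    · rw [ln n h]; exact hw0 n
  have hall : ∀ {l : Fin k → V}, (∀ n, FU (F := F) w v n (l n)) → ∀ n r, B (l n) (l r) = 0 := by
    intro l hl n r
    by_cases h : n = r
    · rw [h, hB]
    · exact FU.orth hf h (hl n) (hl r)
  have hsym : ∀ n r : Fin k, path (F := F) n r = path r n := by
    intro n r; simp only [path, or_comm]
  have hS0 : ∀ n : Fin k, path (F := F) n n = 0 := by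
    intro n; simp [path]
  have hS1 : ∀ n : Fin k, ∃ r : Fin k, path (F := F) n r ≠ 0 := by
    intro n
    by_cases h : n.val = 0
    · exact ⟨⟨1, by omega⟩, by simp [path, h]⟩
    · refine ⟨⟨n.val - 1, by omega⟩, ?_⟩
      rw [path, if_pos]; · exact one_ne_zero
      right; simp only; omega
  obtain ⟨x, hxi, hx⟩ := Nil_iso hB path hsym w (hall fuw)
  obtain ⟨y, hyi, hy⟩ := Nil_iso hB path hsym v (hall fuv)
  obtain ⟨z, hzi, hz⟩ := Nil_iso hB path hsym l (hall hl)
  refine ⟨x, y, z, hxi, hyi, hzi, ?_⟩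
  rintro g ⟨c, hc, hg⟩ hPg hPx hPy hPz
  choose σ hσ using hP g hPg
  obtain ⟨d, hd, hd2⟩ := partE1 hB hf hS0 hS1 fuw hw0 hx hc hg hσ (hP _ hPx)
  obtain ⟨a, ha, ha2⟩ := partE1 hB hf hS0 hS1 fuv hv0 hy hc hg hσ (hP _ hPy)
  obtain ⟨e, he, he2⟩ := partE1 hB hf hS0 hS1 hl hl0 hz hc hg hσ (hP _ hPz)
  have hd0 : ∀ n, d n ≠ 0 := by
    intro n h
    have := hd n
    rw [h, zero_smul] at this
    exact hw0 n ((LinearEquiv.map_eq_zero_iff g).mp this)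
  have ha0 : ∀ n, a n ≠ 0 := by
    intro n h
    have := ha n
    rw [h, zero_smul] at this
    exact hv0 n ((LinearEquiv.map_eq_zero_iff g).mp this)
  have hinj : ∀ n r, σ n = σ r → n = r := by
    intro n r h
    by_contra hne
    apply hw0 r
    apply (LinearEquiv.map_eq_zero_iff g).mp
    refine FU.nondeg2 hB hf (hσ n _ (fuw n)) (h ▸ hσ r _ (fuw r)) (q := g (v n)) ?_ ?_ ?_
    · rw [hg]; exact mul_ne_zero hc (hf.ne n)
    · rw [hg, hf.ww n r hne, mul_zero]
    · rw [hg, hf.vw n r hne, mul_zero]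
  have ho := he o
  rw [lo, map_add, hd, ha] at ho
  have hso : σ o = o := by
    by_contra hne
    rw [ln _ hne] at ho
    have := congrArg (B (w (σ o))) ho
    simp only [map_add, map_smul, hB, smul_eq_mul, mul_zero, zero_add] at this
    exact mul_ne_zero (ha0 o) (hf.ne _) this
  have hdao : d o = a o := by
    rw [hso, lo] at ho
    have e1 := congrArg (B (w o)) ho
    have e2 := congrArg (B (v o)) ho
    simp only [map_add, map_smul, hB, smul_eq_mul, mul_zero, zero_add, add_zero] at e1 e2
    rw [mul_right_cancel₀ (hf.ne o) e1]
    apply mul_right_cancel₀ _ e2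
    rw [anti hB]; exact neg_ne_zero.mpr (hf.ne o)
  have hsig : ∀ n (hn : n < k), σ ⟨n, hn⟩ = ⟨n, hn⟩ := by
    intro n
    induction n using Nat.strong_induction_on with
    | _ n ih =>
      intro hn
      by_cases h0 : n = 0
      · subst h0; exact hso
      · have h1 := hd2 ⟨n - 1, by omega⟩ ⟨n, hn⟩
        rw [ih (n - 1) (by omega)] at h1
        have hp : path (F := F) (⟨n - 1, by omega⟩ : Fin k) ⟨n, hn⟩ = 1 := by
          rw [path, if_pos]; left; simp only; omega
        rw [hp, mul_one] at h1
        have h2 : path (F := F) (⟨n - 1, by omega⟩ : Fin k) (σ ⟨n, hn⟩) ≠ 0 := by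
          intro h3
          rw [h3, mul_zero] at h1
          exact mul_ne_zero (hd0 _) (hd0 _) h1
        rw [path] at h2
        have h3 : n - 1 + 1 = (σ ⟨n, hn⟩).val ∨ (σ ⟨n, hn⟩).val + 1 = n - 1 := by
          by_contra h4; exact h2 (if_neg h4)
        rcases h3 with h3 | h3
        · ext; simp only; omega
        · exfalso
          have h4 := ih (σ ⟨n, hn⟩).val (by omega) (by omega)
          have h5 := hinj _ _ h4
          have := congrArg Fin.val h5
          simp only at this
          omega
  have hsig' : ∀ n, σ n = n := fun n => hsig n.val n.2
  have hda : ∀ n, d n * a n = c := by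
    intro n
    have := hg (w n) (v n)
    rw [hd, ha, hsig', map_smul, map_smul, LinearMap.smul_apply, smul_eq_mul, smul_eq_mul] at this
    apply mul_right_cancel₀ (hf.ne n)
    linear_combination this
  have hdn : ∀ n (hn : n < k), d ⟨n, hn⟩ = d o := by
    intro n
    induction n with
    | zero => intro _; rfl
    | succ n ih =>
      intro hn
      have h1 := hd2 ⟨n, by omega⟩ ⟨n + 1, hn⟩
      have hp : path (F := F) (⟨n, by omega⟩ : Fin k) ⟨n + 1, hn⟩ = 1 := by
          rw [path, if_pos]; left; simp only
      rw [hsig', hsig', hp, mul_one, mul_one, ih (by omega), ← hda o, ← hdao] at h1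
      exact mul_left_cancel₀ (hd0 o) h1
  have hdn' : ∀ n, d n = d o := fun n => hdn n.val n.2
  have han' : ∀ n, a n = d o := by
    intro n
    apply mul_left_cancel₀ (hd0 o)
    nth_rewrite 1 [← hdn' n]
    rw [hda, ← hda o, ← hdao]
  refine ⟨d o, fun u => ?_⟩
  obtain ⟨α, β, rfl⟩ := hf.expand hB u
  simp only [map_sum, map_add, map_smul, hd, ha, hsig', hdn', han', Finset.smul_sum]
  refine Finset.sum_congr rfl fun n _ => ?_
  module

/-- The abstract main theorem. -/
theorem main [Finite (V ≃ₗ[F] V)] [FiniteDimensional F V] (hB : ∀ x, B x x = 0)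
    (hnd : ∀ u, (∀ v, B u v = 0) → u = 0) (h2 : (2 : F) ≠ 0) {a b : F} (hab : a ^ 2 + b ^ 2 = -1)
    (hdim : 4 ≤ Module.finrank F V)
    (K H : Subgroup (V ≃ₗ[F] V)) (hK : ∀ g, g ∈ K ↔ Sim B g) (hHK : H ≤ K)
    (hodd : ¬ 2 ∣ H.relIndex K) (hgood : ∀ y ∈ H, Good y) (hsol : Group.IsSolvable H) :
    ∃ x y z : V ≃ₗ[F] V, Iso B x ∧ Iso B y ∧ Iso B z ∧
      ∀ g ∈ H, x⁻¹ * g * x ∈ H → y⁻¹ * g * y ∈ H → z⁻¹ * g * z ∈ H → ∃ c : F, ∀ u, g u = c • u := by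
  obtain ⟨k, w, v, i, j, hf, h, hH⟩ := partAB hB hnd h2 hab K H hK hodd
  have hk := hf.le_card
  have hsim : ∀ y ∈ H, Sim B y := fun y hy => (hK y).mp (hHK hy)
  obtain ⟨x, y, z, hx, hy, hz, hg⟩ := partE2 hB hf (by omega) (fun g => g ∈ H)
    (fun g hg n => partD hB h2 hab H hgood hsol hsim hf h hH hg n)
  exact ⟨x, y, z, hx, hy, hz, fun g h => hg g (hsim g h) h⟩

end HallSp
namespace HallSp

theorem mat_ext {n : ℕ} {F : Type*} [Field F] {M N : Matrix (Fin n) (Fin n) F}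
    (h : ∀ i, (Pi.single i 1 : Fin n → F) ᵥ* M = (Pi.single i 1 : Fin n → F) ᵥ* N) : M = N := by
  ext i j
  have := congrFun (h i) j
  simpa using this

/-- the left action of the matrix group on row vectors. -/
noncomputable def Phi (n : ℕ) (F : Type*) [Field F] :
    GL (Fin n) F →* ((Fin n → F) ≃ₗ[F] (Fin n → F)) where
  toFun g := LinearEquiv.ofLinearMap
    (Matrix.vecMulLinear ((g⁻¹ : GL (Fin n) F) : Matrix (Fin n) (Fin n) F))
    (Matrix.vecMulLinear (g : Matrix (Fin n) (Fin n) F))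
    (by
      apply LinearMap.ext; intro u
      change (u ᵥ* (g : Matrix (Fin n) (Fin n) F)) ᵥ* ((g⁻¹ : GL (Fin n) F) : Matrix (Fin n) (Fin n) F) = u
      rw [Matrix.vecMul_vecMul, g.mul_inv, Matrix.vecMul_one])
    (by
      apply LinearMap.ext; intro u
      change (u ᵥ* ((g⁻¹ : GL (Fin n) F) : Matrix (Fin n) (Fin n) F)) ᵥ* (g : Matrix (Fin n) (Fin n) F) = u
      rw [Matrix.vecMul_vecMul, g.inv_mul, Matrix.vecMul_one])
  map_one' := by
    apply LinearEquiv.ext; intro u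
    change u ᵥ* (((1 : GL (Fin n) F)⁻¹ : GL (Fin n) F) : Matrix (Fin n) (Fin n) F) = u
    rw [inv_one, Units.val_one, Matrix.vecMul_one]
  map_mul' g h := by
    apply LinearEquiv.ext; intro u
    change u ᵥ* (((g * h)⁻¹ : GL (Fin n) F) : Matrix (Fin n) (Fin n) F) =
      (u ᵥ* ((h⁻¹ : GL (Fin n) F) : Matrix (Fin n) (Fin n) F)) ᵥ* ((g⁻¹ : GL (Fin n) F) : Matrix (Fin n) (Fin n) F)
    rw [Matrix.vecMul_vecMul, _root_.mul_inv_rev, Units.val_mul]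

variable {n : ℕ} {F : Type*} [Field F]

theorem Phi_apply (g : GL (Fin n) F) (u : Fin n → F) :
    Phi n F g u = u ᵥ* ((g⁻¹ : GL (Fin n) F) : Matrix (Fin n) (Fin n) F) := rfl

theorem Phi_inv_apply (g : GL (Fin n) F) (u : Fin n → F) :
    Phi n F g⁻¹ u = u ᵥ* (g : Matrix (Fin n) (Fin n) F) := by
  rw [Phi_apply, inv_inv]

theorem Phi_inj : Function.Injective (Phi n F) := by
  rw [injective_iff_map_eq_one]
  intro g hg
  rw [← inv_eq_one]
  apply Units.ext
  apply mat_ext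
  intro i
  rw [← Phi_apply, hg, Units.val_one, Matrix.vecMul_one]; rfl

theorem Phi_surj : Function.Surjective (Phi n F) := by
  intro f
  let M : Matrix (Fin n) (Fin n) F := LinearMap.toMatrixRight' f.toLinearMap
  let M' : Matrix (Fin n) (Fin n) F := LinearMap.toMatrixRight' f.symm.toLinearMap
  have hM : ∀ u, u ᵥ* M = f u := fun u => by
    have : Matrix.toLinearMapRight' M = f.toLinearMap := by simp [M]
    exact LinearMap.congr_fun this u
  have hM' : ∀ u, u ᵥ* M' = f.symm u := fun u => by
    have : Matrix.toLinearMapRight' M' = f.symm.toLinearMap := by simp [M']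
    exact LinearMap.congr_fun this u
  let g : GL (Fin n) F := ⟨M', M, by
    apply mat_ext
    intro i
    rw [← Matrix.vecMul_vecMul, hM', hM, LinearEquiv.apply_symm_apply, Matrix.vecMul_one], by
    apply mat_ext
    intro i
    rw [← Matrix.vecMul_vecMul, hM, hM', LinearEquiv.symm_apply_apply, Matrix.vecMul_one]⟩
  exact ⟨g, LinearEquiv.ext fun u => hM u⟩

theorem mem_sim (B : LinearMap.BilinForm F (Fin n → F)) (g : GL (Fin n) F) :
    g ∈ similitudeGroup (fun u v => B u v) ↔ Sim B (Phi n F g) := by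
  rw [← inv_mem_iff]
  constructor
  · rintro ⟨c, hc⟩
    exact ⟨c, c.ne_zero, hc⟩
  · rintro ⟨c, hc, h⟩
    exact ⟨Units.mk0 c hc, h⟩

theorem mem_iso (B : LinearMap.BilinForm F (Fin n → F)) (g : GL (Fin n) F) :
    g ∈ isometryGroup (fun u v => B u v) ↔ Iso B (Phi n F g) := by
  rw [← inv_mem_iff]
  exact Iff.rfl

end HallSp

theorem stmt7 (p f q m : ℕ) (hp : p.Prime) (hf : 1 ≤ f) (hq : q = p ^ f)
    (F : Type) [Field F] [Fintype F] (hcard : Fintype.card F = q)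
    (hm : 4 ≤ 2 * m)
    (B : LinearMap.BilinForm F (Fin (2 * m) → F))
    (halt : ∀ v : Fin (2 * m) → F, B v v = 0) (hnd : ∀ u : Fin (2 * m) → F, (∀ v : Fin (2 * m) → F, B u v = 0) → u = 0)
    (hnonsolv : ¬ IsSolvable ↥(similitudeGroup (fun u v => B u v)))
    (π : Set ℕ) (hπ : ∀ r ∈ π, r.Prime) (h2pi : 2 ∈ π) (h3pi : 3 ∉ π) (hppi : p ∉ π)
    (H : Subgroup (GL (Fin (2 * m)) F))
    (hH : IsHallSubgroupIn π (similitudeGroup (fun u v => B u v)) H)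
    (hsolv : IsSolvable ↥H)
    :
    ∃ x y z : GL (Fin (2 * m)) F,
      x ∈ (H : Set (GL (Fin (2 * m)) F)) * (isometryGroup (fun u v => B u v) : Set (GL (Fin (2 * m)) F)) ∧
      y ∈ (H : Set (GL (Fin (2 * m)) F)) * (isometryGroup (fun u v => B u v) : Set (GL (Fin (2 * m)) F)) ∧
      z ∈ (H : Set (GL (Fin (2 * m)) F)) * (isometryGroup (fun u v => B u v) : Set (GL (Fin (2 * m)) F)) ∧
    ∀ g ∈ H ⊓ conjBy H x ⊓ conjBy H y ⊓ conjBy H z,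
      ∃ c : F, (g : Matrix (Fin (2 * m)) (Fin (2 * m)) F) = c • (1 : Matrix (Fin (2 * m)) (Fin (2 * m)) F) := by
  classical
  have hCP : CharP F p := by
    obtain ⟨p', hp'⟩ := CharP.exists F
    have : Fact p'.Prime := ⟨CharP.char_is_prime F p'⟩
    obtain ⟨n, hpp, hn⟩ := FiniteField.card F p'
    have hdvd : p' ∣ p ^ f := by
      rw [← hq, ← hcard, hn]; exact dvd_pow_self _ n.ne_zero
    have := (Nat.prime_dvd_prime_iff_eq hpp hp).mp (hpp.dvd_of_dvd_pow hdvd)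
    rwa [this] at hp'
  have hcast : ∀ r : ℕ, ¬ p ∣ r → (r : F) ≠ 0 := fun r hr h =>
    hr ((CharP.cast_eq_zero_iff F p r).mp h)
  have h2 : (2 : F) ≠ 0 := by
    have := hcast 2 (fun h => by
      have := (Nat.prime_dvd_prime_iff_eq hp Nat.prime_two).mp h
      exact hppi (this ▸ h2pi))
    exact_mod_cast this
  obtain ⟨a, b, hab⟩ : ∃ a b : F, a ^ 2 + b ^ 2 = -1 := by
    have : Fact p.Prime := ⟨hp⟩
    obtain ⟨a, b, h⟩ := CharP.sq_add_sq F p (-1)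
    exact ⟨a, b, by exact_mod_cast h⟩
  have hfin : Finite ((Fin (2 * m) → F) ≃ₗ[F] (Fin (2 * m) → F)) :=
    Finite.of_surjective _ HallSp.Phi_surj
  obtain ⟨hHK, hord, hidx⟩ := hH
  let Φ := HallSp.Phi (2 * m) F
  have hΦ : Function.Injective Φ := HallSp.Phi_inj
  have hmem : ∀ g, Φ g ∈ H.map Φ ↔ g ∈ H := fun g => Subgroup.mem_map_iff_mem hΦ
  have hrel : (H.map Φ).relIndex ((similitudeGroup (fun u v => B u v)).map Φ) =
      H.relIndex (similitudeGroup (fun u v => B u v)) :=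
    Subgroup.relIndex_map_map_of_injective _ _ hΦ
  have hsolΦ : Group.IsSolvable (H.map Φ) := by
    have : Group.IsSolvable H := hsolv
    exact Group.isSolvable_of_surjective (Φ.subgroupMap_surjective H)
  obtain ⟨x, y, z, hx, hy, hz, hg⟩ := HallSp.main (B := B) halt hnd h2 hab (by simpa using hm)
    ((similitudeGroup (fun u v => B u v)).map Φ) (H.map Φ)
    (by
      intro g
      obtain ⟨g, rfl⟩ := HallSp.Phi_surj g
      rw [← HallSp.mem_sim]
      exact Subgroup.mem_map_iff_mem hΦ)
    (Subgroup.map_mono hHK) (by rw [hrel]; exact hidx 2 h2pi)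
    (by
      rintro _ ⟨g, hgH, rfl⟩
      refine ⟨Nat.card H, hcast _ fun h => hppi (hord p hp h),
        fun h => h3pi (hord 3 Nat.prime_three h), ?_⟩
      have : (⟨g, hgH⟩ : H) ^ Nat.card H = 1 := pow_card_eq_one'
      have e : g ^ Nat.card H = 1 := congrArg Subtype.val this
      rw [← map_pow]
      exact (congrArg Φ e).trans (map_one Φ)) hsolΦ
  obtain ⟨x, rfl⟩ := HallSp.Phi_surj x
  obtain ⟨y, rfl⟩ := HallSp.Phi_surj y
  obtain ⟨z, rfl⟩ := HallSp.Phi_surj z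
  rw [← HallSp.mem_iso] at hx hy hz
  have hconj : ∀ g s : GL (Fin (2 * m)) F, g ∈ conjBy H s⁻¹ → (Φ s)⁻¹ * Φ g * Φ s ∈ H.map Φ := by
    rintro g s ⟨h, hh, rfl⟩
    refine ⟨h, hh, ?_⟩
    rw [← map_inv, ← map_mul, ← map_mul]
    congr 1
    simp [mul_assoc]
  refine ⟨x⁻¹, y⁻¹, z⁻¹, ⟨1, H.one_mem, x⁻¹, inv_mem hx, one_mul _⟩,
    ⟨1, H.one_mem, y⁻¹, inv_mem hy, one_mul _⟩, ⟨1, H.one_mem, z⁻¹, inv_mem hz, one_mul _⟩, ?_⟩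
  rintro g ⟨⟨⟨h1, h2⟩, h3⟩, h4⟩
  obtain ⟨c, hc⟩ := hg (Φ g⁻¹) ((hmem _).mpr (H.inv_mem h1)) (hconj _ _ (inv_mem h2))
    (hconj _ _ (inv_mem h3)) (hconj _ _ (inv_mem h4))
  refine ⟨c, ?_⟩
  apply HallSp.mat_ext
  intro i
  have := hc (Pi.single i 1)
  rw [HallSp.Phi_inv_apply] at this
  rw [this, Matrix.vecMul_smul, Matrix.vecMul_one]
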